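/- Let k ≥ 2 and let 𝒜 = {A_1, …, A_n} be subsets of ℝ² with f_{k+1}(𝒜) = 0 and such that for every σ with |σ| ∈ {k, k+1} the set A_σ is empty, a single point, or both open and path-connected. For every σ ⊆ {1, …, n} with |σ| = k+1 and A_σ ≠ ∅ choose a point a_σ ∈ A_σ (these points are pairwise distinct since f_{k+1}(𝒜) = 0); let W be the set of all chosen points and, for each k-element τ ⊆ {1, …, n}, let V_τ = {a_σ : σ ⊃ τ, |σ| = k+1, A_σ ≠ ∅}. Then one can choose, for every k-element τ with V_τ ≠ ∅, a tree G_τ with vertex set V_τ together with a drawing of G_τ whose image is contained in A_τ, such that the graph G with vertex set W whose edge set is the union of the edge sets of all the trees G_τ is a simple graph, and the union of these drawings is a crossing-free drawing of G inside ⋃𝒜; in particular G is a simple planar graph. -/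

import Mathlib

/-- `NerveTop A k` is the set of index sets `σ` with `|σ| = k+1` and `⋂ i ∈ σ, A i ≠ ∅`,
i.e. the `k`-dimensional faces of the nerve of `𝒜`. -/
abbrev NerveTop {α : Type*} {n : ℕ} (A : Fin n → Set α) (k : ℕ) : Type _ :=
  {σ : Finset (Fin n) // σ.card = k + 1 ∧ (⋂ i ∈ σ, A i).Nonempty}

/-- `fNum A k` is `f_k(𝒜)`: the number of subsets `σ` of the index set with
`|σ| = k+1` such that `⋂ i ∈ σ, A i` is nonempty. -/
noncomputable def fNum {α : Type*} {n : ℕ} (A : Fin n → Set α) (k : ℕ) : ℕ :=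
  Nat.card (NerveTop A k)

section RTsec

open Set Topology Filter

theorem RT.rank_gt : 1 < Module.rank ℝ (EuclideanSpace ℝ (Fin 2)) := by
  rw [← Module.finrank_eq_rank]; simp

/-- local push -/
theorem RT.push_ball (c : EuclideanSpace ℝ (Fin 2)) (r : ℝ) (hr : 0 < r)
    (q : EuclideanSpace ℝ (Fin 2)) (hq : dist q c < r) :
    ∃ h : EuclideanSpace ℝ (Fin 2) ≃ₜ EuclideanSpace ℝ (Fin 2),
      h c = q ∧ ∀ x, x ∉ Metric.ball c r → h x = x := by
  set f : EuclideanSpace ℝ (Fin 2) → EuclideanSpace ℝ (Fin 2) :=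
    fun x => x + (max 0 (1 - dist x c / r)) • (q - c) with hf
  have hlip : ∀ x y : EuclideanSpace ℝ (Fin 2),
      |max 0 (1 - dist x c / r) - max 0 (1 - dist y c / r)| ≤ dist x y / r := by
    intro x y
    have h : |max 0 (1 - dist x c / r) - max 0 (1 - dist y c / r)| ≤
        |(1 - dist x c / r) - (1 - dist y c / r)| := by
      simpa only [max_comm] using
        abs_max_sub_max_le_abs (1 - dist x c / r) (1 - dist y c / r) 0
    refine h.trans ?_
    have : (1 - dist x c / r) - (1 - dist y c / r) = (dist y c - dist x c) / r := by ring
    rw [this, abs_div, abs_of_pos hr]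
    gcongr
    rw [abs_sub_comm]
    exact abs_dist_sub_le x y c
  have hA : ApproximatesLinearOn f
      ((ContinuousLinearEquiv.refl ℝ (EuclideanSpace ℝ (Fin 2)) :
        EuclideanSpace ℝ (Fin 2) →L[ℝ] EuclideanSpace ℝ (Fin 2))) univ
        (Real.toNNReal (dist q c / r)) := by
    intro x _ y _
    rw [Real.coe_toNNReal _ (by positivity)]
    have : f x - f y - (ContinuousLinearEquiv.refl ℝ (EuclideanSpace ℝ (Fin 2)) :
        EuclideanSpace ℝ (Fin 2) →L[ℝ] EuclideanSpace ℝ (Fin 2)) (x - y)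
        = (max 0 (1 - dist x c / r) - max 0 (1 - dist y c / r)) • (q - c) := by
      simp only [hf, ContinuousLinearEquiv.coe_coe, ContinuousLinearEquiv.coe_refl', id, sub_smul]
      abel
    rw [this, norm_smul, Real.norm_eq_abs, ← dist_eq_norm, ← dist_eq_norm]
    calc _ ≤ dist x y / r * dist q c := by gcongr; exact hlip x y
      _ = _ := by ring
  have hc : Subsingleton (EuclideanSpace ℝ (Fin 2)) ∨ Real.toNNReal (dist q c / r) <
      ‖((ContinuousLinearEquiv.refl ℝ (EuclideanSpace ℝ (Fin 2))).symm :
        EuclideanSpace ℝ (Fin 2) →L[ℝ] EuclideanSpace ℝ (Fin 2))‖₊⁻¹ := by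
    right
    have : ‖((ContinuousLinearEquiv.refl ℝ (EuclideanSpace ℝ (Fin 2))).symm :
        EuclideanSpace ℝ (Fin 2) →L[ℝ] EuclideanSpace ℝ (Fin 2))‖₊ = 1 := by
      have := ContinuousLinearMap.nnnorm_id (𝕜 := ℝ) (E := EuclideanSpace ℝ (Fin 2))
      exact this
    rw [this, inv_one, Real.toNNReal_lt_one]
    rwa [div_lt_one hr]
  refine ⟨hA.toHomeomorph f hc, ?_, ?_⟩
  · change f c = q
    simp [hf]
  · intro x hx
    change f x = x
    have : 1 - dist x c / r ≤ 0 := by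
      rw [Metric.mem_ball, not_lt] at hx
      rw [sub_nonpos, one_le_div hr]; exact hx
    simp [hf, max_eq_left this]

theorem RT.fix_mem {Ω : Set (EuclideanSpace ℝ (Fin 2))}
    {h : EuclideanSpace ℝ (Fin 2) ≃ₜ EuclideanSpace ℝ (Fin 2)}
    (hh : ∀ x, x ∉ Ω → h x = x) {x} (hx : x ∈ Ω) : h x ∈ Ω := by
  by_contra hc
  have := hh _ hc
  exact hc (by rw [h.injective this]; exact hx)

theorem RT.drag {Ω : Set (EuclideanSpace ℝ (Fin 2))} (ho : IsOpen Ω) (hc : IsPreconnected Ω)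
    {p q : EuclideanSpace ℝ (Fin 2)} (hp : p ∈ Ω) (hq : q ∈ Ω) :
    ∃ h : EuclideanSpace ℝ (Fin 2) ≃ₜ EuclideanSpace ℝ (Fin 2),
      h p = q ∧ ∀ x, x ∉ Ω → h x = x := by
  refine hc.induction₂' (fun p q => ∃ h : EuclideanSpace ℝ (Fin 2) ≃ₜ EuclideanSpace ℝ (Fin 2),
      h p = q ∧ ∀ x, x ∉ Ω → h x = x) ?_ ?_ hp hq
  · intro x hx
    obtain ⟨r, hr, hb⟩ := Metric.isOpen_iff.1 ho x hx
    filter_upwards [mem_nhdsWithin_of_mem_nhds (Metric.ball_mem_nhds x hr)] with y hy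
    obtain ⟨h, h1, h2⟩ := RT.push_ball x r hr y hy
    refine ⟨⟨h, h1, fun z hz => h2 z fun hz' => hz (hb hz')⟩, ⟨h.symm, ?_, fun z hz => ?_⟩⟩
    · rw [← h1]; simp
    · rw [Homeomorph.symm_apply_eq]; exact (h2 z fun hz' => hz (hb hz')).symm
  · rintro x y z _ _ _ ⟨h, h1, h2⟩ ⟨g, g1, g2⟩
    refine ⟨h.trans g, by simp [h1, g1], fun w hw => by simp [h2 w hw, g2 w hw]⟩

theorem RT.punctured_ball (x : EuclideanSpace ℝ (Fin 2)) {r : ℝ} (hr : 0 < r) :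
    IsPreconnected (Metric.ball x r \ {x}) := by
  have h1 : IsPreconnected ({0}ᶜ : Set (EuclideanSpace ℝ (Fin 2))) :=
    (isConnected_compl_singleton_of_one_lt_rank RT.rank_gt 0).isPreconnected
  have h2 := h1.image (OpenPartialHomeomorph.univBall x r)
    (OpenPartialHomeomorph.continuous_univBall x r).continuousOn
  convert h2
  ext y
  constructor
  · rintro ⟨hy, hyx⟩
    have hy' : y ∈ (OpenPartialHomeomorph.univBall x r).target := by
      rwa [OpenPartialHomeomorph.univBall_target x hr]
    refine ⟨(OpenPartialHomeomorph.univBall x r).symm y, ?_, OpenPartialHomeomorph.right_inv _ hy'⟩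
    intro h0
    apply hyx
    have := OpenPartialHomeomorph.right_inv _ hy'
    rw [mem_singleton_iff] at h0
    rw [h0, OpenPartialHomeomorph.univBall_apply_zero] at this
    exact this.symm
  · rintro ⟨z, hz, rfl⟩
    refine ⟨?_, ?_⟩
    · rw [← OpenPartialHomeomorph.univBall_target x hr]
      exact OpenPartialHomeomorph.map_source _ (by simp)
    · intro h
      apply hz
      have h' : (OpenPartialHomeomorph.univBall x r) z = (OpenPartialHomeomorph.univBall x r) 0 := by
        rw [OpenPartialHomeomorph.univBall_apply_zero]; exact h
      exact (OpenPartialHomeomorph.univBall x r).injOn (by simp) (by simp) h'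

theorem RT.diff_singleton {Ω : Set (EuclideanSpace ℝ (Fin 2))} (ho : IsOpen Ω)
    (hc : IsPreconnected Ω) (x : EuclideanSpace ℝ (Fin 2)) : IsPreconnected (Ω \ {x}) := by
  by_cases hx : x ∈ Ω
  swap
  · rwa [sdiff_singleton_eq_self hx]
  obtain ⟨r, hr, hb⟩ := Metric.isOpen_iff.1 ho x hx
  have key : ∀ u v : Set (EuclideanSpace ℝ (Fin 2)), IsOpen u → IsOpen v → Ω \ {x} ⊆ u ∪ v →
      (Metric.ball x r \ {x}) ⊆ u → ((Ω \ {x}) ∩ v).Nonempty →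
      ((Ω \ {x}) ∩ (u ∩ v)).Nonempty := by
    intro u v hu hv huv hP ⟨z, hz, hzv⟩
    obtain ⟨y, hy, hy1, hy2⟩ := hc (u ∪ Metric.ball x r) (v \ {x})
      (hu.union Metric.isOpen_ball) (hv.sdiff isClosed_singleton)
      (by
        intro y hy
        by_cases hyx : y = x
        · left; right; rw [hyx]; exact Metric.mem_ball_self hr
        · rcases huv ⟨hy, hyx⟩ with h | h
          · left; left; exact h
          · right; exact ⟨h, hyx⟩)
      ⟨x, hx, Or.inr (Metric.mem_ball_self hr)⟩ ⟨z, hz.1, hzv, hz.2⟩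
    refine ⟨y, ⟨hy, hy2.2⟩, ?_, hy2.1⟩
    rcases hy1 with h | h
    · exact h
    · exact hP ⟨h, hy2.2⟩
  intro u v hu hv huv hu' hv'
  have hsub : Metric.ball x r \ {x} ⊆ Ω \ {x} := sdiff_subset_sdiff_left hb
  by_cases h1 : ((Metric.ball x r \ {x}) ∩ v).Nonempty
  · by_cases h2 : ((Metric.ball x r \ {x}) ∩ u).Nonempty
    · obtain ⟨y, hy, hy'⟩ := RT.punctured_ball x hr u v hu hv (hsub.trans huv) h2 h1
      exact ⟨y, hsub hy, hy'⟩
    · rw [inter_comm u v]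
      refine key v u hv hu (by rwa [union_comm]) ?_ hu'
      intro y hy
      rcases huv (hsub hy) with h | h
      · exact (h2 ⟨y, hy, h⟩).elim
      · exact h
  · refine key u v hu hv huv ?_ hv'
    intro y hy
    rcases huv (hsub hy) with h | h
    · exact h
    · exact (h1 ⟨y, hy, h⟩).elim

theorem RT.diff_finset {Ω : Set (EuclideanSpace ℝ (Fin 2))} (ho : IsOpen Ω)
    (hc : IsPreconnected Ω) (F : Finset (EuclideanSpace ℝ (Fin 2))) :
    IsPreconnected (Ω \ (F : Set (EuclideanSpace ℝ (Fin 2)))) := by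
  classical
  induction F using Finset.induction_on with
  | empty => simpa using hc
  | insert a s ha ih =>
    have := RT.diff_singleton (ho.sdiff s.finite_toSet.isClosed) ih a
    rwa [sdiff_sdiff, union_comm, ← insert_eq, ← Finset.coe_insert] at this

/-- A homeomorphic image of a segment through given points. -/
theorem RT.thread {Ω : Set (EuclideanSpace ℝ (Fin 2))} (ho : IsOpen Ω) (hc : IsPreconnected Ω)
    {y0 y1 : EuclideanSpace ℝ (Fin 2)} (h0 : y0 ∈ Ω) (h1 : y1 ∈ Ω) (h01 : y0 ≠ y1)
    (s : Finset (EuclideanSpace ℝ (Fin 2))) (hs : ∀ y ∈ s, y ∈ Ω ∧ y ≠ y0 ∧ y ≠ y1) :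
    ∃ (φ : EuclideanSpace ℝ (Fin 2) ≃ₜ EuclideanSpace ℝ (Fin 2)) (e : EuclideanSpace ℝ (Fin 2)),
      e ≠ 0 ∧ φ 0 = y0 ∧ φ e = y1 ∧ (∀ t ∈ Icc (0 : ℝ) 1, φ (t • e) ∈ Ω) ∧
      ∀ y ∈ s, ∃ t ∈ Icc (0 : ℝ) 1, φ (t • e) = y := by
  classical
  induction s using Finset.induction_on with
  | empty =>
    obtain ⟨r, hr, hb⟩ := Metric.isOpen_iff.1 ho y0 h0
    obtain ⟨v, hv⟩ := exists_ne (0 : EuclideanSpace ℝ (Fin 2))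
    set e : EuclideanSpace ℝ (Fin 2) := (r / 2 / ‖v‖) • v with he
    have hvn : 0 < ‖v‖ := norm_pos_iff.2 hv
    have hen : ‖e‖ = r / 2 := by
      rw [he, norm_smul, Real.norm_eq_abs, abs_of_pos (by positivity)]; field_simp
    have hball : ∀ t ∈ Icc (0 : ℝ) 1, t • e + y0 ∈ Ω := by
      intro t ht
      apply hb
      rw [Metric.mem_ball, dist_eq_norm, add_sub_cancel_right, norm_smul, hen, Real.norm_eq_abs,
        abs_of_nonneg ht.1]
      nlinarith [ht.2]
    have he0 : e ≠ 0 := by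
      intro h; rw [h, norm_zero] at hen; linarith
    have hc' := RT.diff_singleton ho hc y0
    obtain ⟨h, hh1, hh2⟩ := RT.drag (ho.sdiff isClosed_singleton) hc' (p := e + y0) (q := y1)
      ⟨by simpa using hball 1 (by simp), by simpa using he0⟩ ⟨h1, fun h => h01 h.symm⟩
    refine ⟨(Homeomorph.addRight y0).trans h, e, he0, ?_, ?_, ?_, by simp⟩
    · simp [hh2 y0]
    · simpa using hh1
    · intro t ht
      refine RT.fix_mem (Ω := Ω) (fun x hx => hh2 x fun h' => hx h'.1) ?_
      exact hball t ht
  | insert y s hy ih =>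
    obtain ⟨φ, e, he, hφ0, hφ1, hφΩ, hφs⟩ := ih fun y hy => hs y (Finset.mem_insert_of_mem hy)
    set F : Finset (EuclideanSpace ℝ (Fin 2)) := insert y0 (insert y1 s) with hF
    have hinj : Function.Injective fun t : ℝ => φ (t • e) :=
      φ.injective.comp (smul_left_injective ℝ he)
    obtain ⟨t, ht, htF⟩ : ∃ t ∈ Icc (0 : ℝ) 1, φ (t • e) ∉ F := by
      by_contra hcon
      push Not at hcon
      have : (Icc (0 : ℝ) 1).Finite :=
        (F.finite_toSet.preimage hinj.injOn).subset fun t ht => hcon t ht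
      exact (Icc_infinite (zero_lt_one)) this
    obtain ⟨h, hh1, hh2⟩ := RT.drag (ho.sdiff F.finite_toSet.isClosed) (RT.diff_finset ho hc F)
      (p := φ (t • e)) (q := y) ⟨hφΩ t ht, htF⟩
      ⟨(hs y (Finset.mem_insert_self _ _)).1, by
        have := hs y (Finset.mem_insert_self _ _)
        simp [hF, this.2.1, this.2.2, hy]⟩
    refine ⟨φ.trans h, e, he, ?_, ?_, ?_, ?_⟩
    · simp only [Homeomorph.trans_apply, hφ0]; exact hh2 _ (by simp [hF])
    · simp only [Homeomorph.trans_apply, hφ1]; exact hh2 _ (by simp [hF])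
    · intro t ht
      exact RT.fix_mem (Ω := Ω) (fun x hx => hh2 x fun h' => hx h'.1) (hφΩ t ht)
    · intro z hz
      rcases Finset.mem_insert.1 hz with rfl | hz
      · exact ⟨t, ht, hh1⟩
      · obtain ⟨t', ht', h'⟩ := hφs z hz
        refine ⟨t', ht', ?_⟩
        simp only [Homeomorph.trans_apply, h']
        exact hh2 _ (by simp [hF, hz])

/-- `s` is the image of an injective path from `x` to `y`. -/
def RT.IsArcSet {X : Type*} [TopologicalSpace X] (s : Set X) (x y : X) : Prop :=
  ∃ γ : Path x y, Function.Injective ⇑γ ∧ Set.range ⇑γ = s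

theorem RT.IsArcSet.symm {X : Type*} [TopologicalSpace X] {s : Set X} {x y : X}
    (h : RT.IsArcSet s x y) : RT.IsArcSet s y x := by
  obtain ⟨γ, h1, h2⟩ := h
  refine ⟨γ.symm, ?_, by rw [Path.symm_range, h2]⟩
  intro u v huv
  have := h1 huv
  exact unitInterval.symm_inj.1 this

theorem RT.arc_of_fun {X : Type*} [TopologicalSpace X] (g : ℝ → X) (hg : Continuous g) {s t : ℝ}
    (hst : s < t) (hi : InjOn g (Icc s t)) : RT.IsArcSet (g '' Icc s t) (g s) (g t) := by
  have hmem : ∀ u : unitInterval, s + u * (t - s) ∈ Icc s t := by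
    intro u
    have h0 := u.2.1; have h1 := u.2.2
    constructor <;> nlinarith
  refine ⟨⟨⟨fun u => g (s + u * (t - s)), by fun_prop⟩, by simp, by simp⟩, ?_, ?_⟩
  · intro u v huv
    have := hi (hmem u) (hmem v) huv
    have h2 : (u : ℝ) * (t - s) = v * (t - s) := by linarith
    exact Subtype.ext (mul_right_cancel₀ (sub_pos.2 hst).ne' h2)
  · ext x
    constructor
    · rintro ⟨u, rfl⟩
      exact ⟨_, hmem u, rfl⟩
    · rintro ⟨r, hr, rfl⟩
      have hts : 0 < t - s := sub_pos.2 hst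
      refine ⟨⟨(r - s) / (t - s), ?_, ?_⟩, ?_⟩
      · exact div_nonneg (sub_nonneg.2 hr.1) hts.le
      · rw [div_le_one hts]; linarith [hr.2]
      · change g (s + (r - s) / (t - s) * (t - s)) = g r
        congr 1
        field_simp
        ring

theorem RT.IsArcSet.trans {X : Type*} [TopologicalSpace X] {s t : Set X} {x y z : X}
    (h : RT.IsArcSet s x y) (h' : RT.IsArcSet t y z) (hst : ∀ w, w ∈ s → w ∈ t → w = y) :
    RT.IsArcSet (s ∪ t) x z := by
  obtain ⟨γ, h1, rfl⟩ := h
  obtain ⟨δ, d1, rfl⟩ := h'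
  refine ⟨γ.trans δ, ?_, Path.trans_range γ δ⟩
  have hcross : ∀ u v : unitInterval, γ u = δ v → u = 1 ∧ v = 0 := by
    intro u v huv
    have := hst (γ u) (mem_range_self _) (by rw [huv]; exact mem_range_self _)
    exact ⟨h1 (by rw [this, γ.target]), d1 (by rw [← huv, this, δ.source])⟩
  intro u v huv
  rw [Path.trans_apply, Path.trans_apply] at huv
  split_ifs at huv with hu hv hv
  · have := congrArg Subtype.val (h1 huv)
    apply Subtype.ext
    dsimp at this
    linarith
  · obtain ⟨e1, e2⟩ := hcross _ _ huv
    have := congrArg Subtype.val e1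
    have h2 := congrArg Subtype.val e2
    dsimp at this h2
    apply Subtype.ext
    linarith
  · obtain ⟨e1, e2⟩ := hcross _ _ huv.symm
    have := congrArg Subtype.val e1
    have h2 := congrArg Subtype.val e2
    dsimp at this h2
    apply Subtype.ext
    linarith
  · have := congrArg Subtype.val (d1 huv)
    apply Subtype.ext
    dsimp at this
    linarith

/-- Step lemma: adding one ray (in straightened coordinates) to a star. -/
theorem RT.star_step {J : Type*} (D : Finset J)
    (φ : EuclideanSpace ℝ (Fin 2) ≃ₜ EuclideanSpace ℝ (Fin 2))
    (U : Set (EuclideanSpace ℝ (Fin 2))) (hU : IsOpen U)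
    (w : J → EuclideanSpace ℝ (Fin 2)) (K : J → Set (EuclideanSpace ℝ (Fin 2)))
    (hK : ∀ j ∈ D, IsClosed (K j)) (hwK : ∀ j ∈ D, φ (w j) ∈ K j)
    (hrayU : ∀ j ∈ D, ∀ c ∈ Icc (0 : ℝ) 1, φ (c • w j) ∈ U)
    (hrayK : ∀ j ∈ D, ∀ l ∈ D, ∀ c ∈ Icc (0 : ℝ) 1, φ (c • w l) ∈ K j → c = 1)
    (L : ℝ → EuclideanSpace ℝ (Fin 2)) (hL : Continuous L)
    (hL0 : L 0 ∉ U) (hLK : ∀ j ∈ D, ∀ t ∈ Icc (0 : ℝ) 1, L t ∉ K j)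
    (hLa : ∀ t ∈ Icc (0 : ℝ) 1, L t ≠ φ 0)
    (hLray : ∃ j ∈ D, ∃ c ∈ Icc (0 : ℝ) 1, ∃ t ∈ Icc (0 : ℝ) 1, L t = φ (c • w j)) :
    ∃ τ ∈ Ioc (0 : ℝ) 1, ∃ w' : EuclideanSpace ℝ (Fin 2), φ w' = L τ ∧ w' ≠ 0 ∧
      (∀ c ∈ Icc (0 : ℝ) 1, φ (c • w') ∈ U) ∧
      (∀ j ∈ D, ∀ c ∈ Icc (0 : ℝ) 1, φ (c • w') ∉ K j) ∧
      (∀ j ∈ D, ∀ c ∈ Icc (0 : ℝ) 1, ∀ c' ∈ Icc (0 : ℝ) 1, c • w' = c' • w j → c = 0) ∧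
      (∀ j ∈ D, ∀ c ∈ Icc (0 : ℝ) 1, ∀ t ∈ Icc (0 : ℝ) τ, L t ≠ φ (c • w j)) ∧
      (∀ c ∈ Icc (0 : ℝ) 1, ∀ t ∈ Icc (0 : ℝ) τ, L t = φ (c • w') → c = 1) := by
  classical
  -- rays as compact sets
  have hrayc : ∀ v : EuclideanSpace ℝ (Fin 2),
      IsClosed ((fun c : ℝ => φ (c • v)) '' Icc 0 1) := fun v =>
    (isCompact_Icc.image (by fun_prop)).isClosed
  set T : Set ℝ := Icc 0 1 ∩ L ⁻¹' (⋃ j ∈ D, (fun c : ℝ => φ (c • w j)) '' Icc 0 1) with hT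
  have hTc : IsCompact T := by
    refine isCompact_Icc.inter_right (IsClosed.preimage hL ?_)
    exact D.finite_toSet.isClosed_biUnion fun j _ => hrayc (w j)
  have hTne : T.Nonempty := by
    obtain ⟨j, hj, c, hc, t, ht, h⟩ := hLray
    exact ⟨t, ht, mem_biUnion hj ⟨c, hc, h.symm⟩⟩
  obtain ⟨t₀, ⟨ht₀I, ht₀⟩, hmin⟩ := hTc.exists_isLeast hTne
  obtain ⟨l, hl, s, hs, hsL⟩ : ∃ l ∈ D, ∃ s ∈ Icc (0 : ℝ) 1, φ (s • w l) = L t₀ := by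
    simpa using ht₀
  have ht₀pos : 0 < t₀ := by
    refine lt_of_le_of_ne ht₀I.1 fun h => hL0 ?_
    rw [h, ← hsL]; exact hrayU l hl s hs
  set O : Set (EuclideanSpace ℝ (Fin 2)) := φ ⁻¹' (U \ ⋃ j ∈ D, K j) with hO
  have hOo : IsOpen O :=
    (hU.sdiff (D.finite_toSet.isClosed_biUnion fun j hj => hK j hj)).preimage φ.continuous
  have hsegO : ∀ c ∈ Icc (0 : ℝ) 1, c • (s • w l) ∈ O := by
    intro c hc
    have hcs : c * s ∈ Icc (0 : ℝ) 1 :=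
      ⟨mul_nonneg hc.1 hs.1, mul_le_one₀ hc.2 hs.1 hs.2⟩
    refine ⟨?_, ?_⟩
    · rw [smul_smul]; exact hrayU l hl _ hcs
    · simp only [mem_iUnion, not_exists]
      intro j hj hmem
      rw [smul_smul] at hmem
      have h1 := hrayK j hj l hl _ hcs hmem
      have hs1 : s = 1 := by nlinarith [hc.1, hc.2, hs.1, hs.2]
      apply hLK l hl t₀ ht₀I
      rw [← hsL, hs1, one_smul]
      exact hwK l hl
  have hev : ∀ᶠ w' in 𝓝 (s • w l), ∀ c ∈ Icc (0 : ℝ) 1, c • w' ∈ O := by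
    refine isCompact_Icc.eventually_forall_of_forall_eventually fun c hc => ?_
    have : Continuous fun z : EuclideanSpace ℝ (Fin 2) × ℝ => z.2 • z.1 := by fun_prop
    exact this.continuousAt.eventually (hOo.mem_nhds (hsegO c hc))
  have htend : Tendsto (fun t => φ.symm (L t)) (𝓝[<] t₀) (𝓝 (s • w l)) := by
    have : ContinuousAt (fun t => φ.symm (L t)) t₀ := (φ.symm.continuous.comp hL).continuousAt
    have h2 : φ.symm (L t₀) = s • w l := by rw [← hsL]; simp
    rw [ContinuousAt, h2] at this
    exact this.mono_left nhdsWithin_le_nhds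
  have hIoo : Ioo 0 t₀ ∈ 𝓝[<] t₀ := Ioo_mem_nhdsLT ht₀pos
  obtain ⟨t₁, ht₁O, ht₁⟩ := ((htend.eventually hev).and hIoo).exists
  set w₀ := φ.symm (L t₁) with hw₀
  have hφw₀ : φ w₀ = L t₁ := by simp [hw₀]
  have hnoray : ∀ j ∈ D, ∀ c ∈ Icc (0 : ℝ) 1, ∀ t ∈ Icc (0 : ℝ) t₁, L t ≠ φ (c • w j) := by
    intro j hj c hc t ht h
    have : t₀ ≤ t := hmin ⟨⟨ht.1, ht.2.trans (ht₁.2.le.trans ht₀I.2)⟩,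
      mem_biUnion hj ⟨c, hc, h.symm⟩⟩
    linarith [ht.2, ht₁.2]
  have hw₀j : ∀ j ∈ D, ∀ c ∈ Icc (0 : ℝ) 1, ∀ c' ∈ Icc (0 : ℝ) 1, c • w₀ = c' • w j → c = 0 := by
    intro j hj c hc c' hc' h
    by_contra hc0
    have hcpos : 0 < c := lt_of_le_of_ne hc.1 (Ne.symm hc0)
    rcases le_or_gt c' c with hle | hlt
    · apply hnoray j hj (c' / c) ⟨div_nonneg hc'.1 hcpos.le, (div_le_one hcpos).2 hle⟩ t₁
        ⟨ht₁.1.le, le_rfl⟩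
      rw [← hφw₀]
      congr 1
      rw [div_eq_inv_mul, ← smul_smul, ← h, smul_smul, inv_mul_cancel₀ hc0, one_smul]
    · have hc'pos : 0 < c' := hcpos.trans hlt
      have hmem := ht₁O (c / c') ⟨by positivity, (div_le_one hc'pos).2 hlt.le⟩
      have heq : (c / c') • w₀ = w j := by
        rw [div_eq_inv_mul, ← smul_smul, h, smul_smul, inv_mul_cancel₀ hc'pos.ne', one_smul]
      rw [heq] at hmem
      exact hmem.2 (mem_biUnion hj (hwK j hj))
  -- trim
  set T' : Set ℝ := Icc 0 t₁ ∩ L ⁻¹' ((fun c : ℝ => φ (c • w₀)) '' Icc 0 1) with hT'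
  have hT'c : IsCompact T' := isCompact_Icc.inter_right ((hrayc w₀).preimage hL)
  have hT'ne : T'.Nonempty :=
    ⟨t₁, ⟨ht₁.1.le, le_rfl⟩, 1, by simp, by simp [hφw₀]⟩
  obtain ⟨τ, ⟨hτI, c₀, hc₀, hc₀L⟩, hτmin⟩ := hT'c.exists_isLeast hT'ne
  have hτ1 : τ ∈ Icc (0 : ℝ) 1 := ⟨hτI.1, hτI.2.trans (ht₁.2.le.trans ht₀I.2)⟩
  have hc₀L' : φ (c₀ • w₀) = L τ := hc₀L
  have hne0 : c₀ • w₀ ≠ 0 := by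
    intro h
    rw [h] at hc₀L'
    exact hLa τ hτ1 hc₀L'.symm
  have hmul : ∀ c ∈ Icc (0 : ℝ) 1, c * c₀ ∈ Icc (0 : ℝ) 1 := fun c hc =>
    ⟨mul_nonneg hc.1 hc₀.1, mul_le_one₀ hc.2 hc₀.1 hc₀.2⟩
  have hτpos : 0 < τ := by
    refine lt_of_le_of_ne hτI.1 fun h => hL0 ?_
    rw [h, ← hc₀L']; exact (ht₁O c₀ hc₀).1
  have hc₀0 : c₀ ≠ 0 := fun h => hne0 (by rw [h, zero_smul])
  refine ⟨τ, ⟨hτpos, hτ1.2⟩, c₀ • w₀, hc₀L', hne0, ?_, ?_, ?_, ?_, ?_⟩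
  · intro c hc
    rw [smul_smul]; exact (ht₁O _ (hmul c hc)).1
  · intro j hj c hc h
    rw [smul_smul] at h
    exact (ht₁O _ (hmul c hc)).2 (mem_biUnion hj h)
  · intro j hj c hc c' hc' h
    rw [smul_smul] at h
    have := hw₀j j hj _ (hmul c hc) c' hc' h
    exact (mul_eq_zero.1 this).resolve_right hc₀0
  · intro j hj c hc t ht
    exact hnoray j hj c hc t ⟨ht.1, ht.2.trans hτI.2⟩
  · intro c hc t ht h
    rw [smul_smul] at h
    have h1 : τ ≤ t := hτmin ⟨⟨ht.1, ht.2.trans hτI.2⟩, _, hmul c hc, h.symm⟩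
    have h2 : t = τ := le_antisymm ht.2 h1
    rw [h2, ← hc₀L', ← smul_smul] at h
    have h3 : (1 : ℝ) • (c₀ • w₀) = c • (c₀ • w₀) := by rw [one_smul]; exact φ.injective h
    exact (smul_left_injective ℝ hne0 h3).symm

theorem RT.star {ι : Type*} [Fintype ι] {U : Set (EuclideanSpace ℝ (Fin 2))} (hU : IsOpen U)
    (hUc : IsPreconnected U) {a : EuclideanSpace ℝ (Fin 2)} (ha : a ∈ U)
    (L : ι → ℝ → EuclideanSpace ℝ (Fin 2)) (hL : ∀ i, Continuous (L i))
    (hLi : ∀ i, InjOn (L i) (Icc 0 1)) (hL0 : ∀ i, L i 0 ∉ U)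
    (hLU : ∀ i, ∀ t ∈ Ioc (0 : ℝ) 1, L i t ∈ U)
    (hLd : ∀ i j, i ≠ j → ∀ t ∈ Icc (0 : ℝ) 1, ∀ t' ∈ Icc (0 : ℝ) 1, L i t ≠ L j t')
    (hLa : ∀ i, ∀ t ∈ Icc (0 : ℝ) 1, L i t ≠ a) :
    ∃ S : ι → Set (EuclideanSpace ℝ (Fin 2)), (∀ i, RT.IsArcSet (S i) a (L i 0)) ∧
      (∀ i, ∀ x ∈ S i, x ∈ U ∨ x = L i 0) ∧
      (∀ i j, i ≠ j → ∀ x, x ∈ S i → x ∈ S j → x = a) := by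
  classical
  have hcl : IsClosed (⋃ i, L i '' Icc 0 1) :=
    isClosed_iUnion_of_finite fun i => (isCompact_Icc.image (hL i)).isClosed
  obtain ⟨y1, hy1U, hy1L, hy1a⟩ : ∃ y1, y1 ∈ U ∧ (∀ i, ∀ t ∈ Icc (0 : ℝ) 1, L i t ≠ y1) ∧
      y1 ≠ a := by
    have hopen : IsOpen (U \ ⋃ i, L i '' Icc 0 1) := hU.sdiff hcl
    have hmem : a ∈ U \ ⋃ i, L i '' Icc 0 1 := by
      refine ⟨ha, ?_⟩
      simp only [mem_iUnion, not_exists]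
      rintro i ⟨t, ht, h⟩
      exact hLa i t ht h
    have hnt : (𝓝[≠] a).NeBot := inferInstance
    have hev : ∀ᶠ y in 𝓝[≠] a, y ∈ U \ ⋃ i, L i '' Icc 0 1 :=
      mem_nhdsWithin_of_mem_nhds (hopen.mem_nhds hmem)
    have hev2 : ∀ᶠ y in 𝓝[≠] a, y ∈ ({a}ᶜ : Set _) := self_mem_nhdsWithin
    obtain ⟨y, ⟨hy, hyL⟩, hya⟩ := (hev.and hev2).exists
    refine ⟨y, hy, fun i t ht h => hyL (mem_iUnion.2 ⟨i, t, ht, h⟩), hya⟩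
  have h01 : (1 : ℝ) ∈ Icc (0 : ℝ) 1 := by simp
  obtain ⟨φ, e, he, hφ0, hφe, hφU, hφL⟩ := RT.thread hU hUc ha hy1U hy1a.symm
    (Finset.univ.image fun i => L i 1) (by
      intro y hy
      obtain ⟨i, -, rfl⟩ := Finset.mem_image.1 hy
      exact ⟨hLU i 1 (by simp), hLa i 1 h01, hy1L i 1 h01⟩)
  have key : ∀ D : Finset ι, ∃ (w : Option ι → EuclideanSpace ℝ (Fin 2))
      (K : Option ι → Set (EuclideanSpace ℝ (Fin 2))),
      w none = e ∧ K none = {y1} ∧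
      (∀ j ∈ Finset.insertNone D, IsClosed (K j)) ∧
      (∀ j ∈ Finset.insertNone D, φ (w j) ∈ K j) ∧
      (∀ j ∈ Finset.insertNone D, w j ≠ 0) ∧
      (∀ j ∈ Finset.insertNone D, ∀ c ∈ Icc (0 : ℝ) 1, φ (c • w j) ∈ U) ∧
      (∀ j ∈ Finset.insertNone D, ∀ l ∈ Finset.insertNone D, ∀ c ∈ Icc (0 : ℝ) 1,
        φ (c • w l) ∈ K j → c = 1 ∧ l = j) ∧
      (∀ j ∈ Finset.insertNone D, ∀ l ∈ Finset.insertNone D, j ≠ l → ∀ c ∈ Icc (0 : ℝ) 1,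
        ∀ c' ∈ Icc (0 : ℝ) 1, c • w j = c' • w l → c = 0) ∧
      (∀ i ∈ D, ∃ τ ∈ Ioc (0 : ℝ) 1, K (some i) = L i '' Icc 0 τ ∧ φ (w (some i)) = L i τ) := by
    intro D
    induction D using Finset.induction_on with
    | empty =>
      refine ⟨fun _ => e, fun _ => {y1}, rfl, rfl, by simp, by simp [hφe], by simp [he],
        fun j hj => hφU, ?_, ?_, by simp⟩
      · intro j hj l hl c hc h
        have hj' : j = none := by cases j <;> simp_all
        have hl' : l = none := by cases l <;> simp_all
        refine ⟨?_, by rw [hj', hl']⟩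
        rw [mem_singleton_iff, ← hφe] at h
        have h3 : c • e = (1 : ℝ) • e := by rw [one_smul]; exact φ.injective h
        exact smul_left_injective ℝ he h3
      · intro j hj l hl hjl
        have hj' : j = none := by cases j <;> simp_all
        have hl' : l = none := by cases l <;> simp_all
        exact (hjl (by rw [hj', hl'])).elim
    | insert i D hi ih =>
      obtain ⟨w, K, hwn, hKn, hK, hwK, hw0, hwU, hwK', hww, hD⟩ := ih
      have hLK : ∀ j ∈ Finset.insertNone D, ∀ t ∈ Icc (0 : ℝ) 1, L i t ∉ K j := by
        rintro (_ | j) hj t ht h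
        · rw [hKn] at h; exact hy1L i t ht h
        · have hjD : j ∈ D := by simpa using hj
          obtain ⟨τ, hτ, hKτ, -⟩ := hD j hjD
          rw [hKτ] at h
          obtain ⟨t', ht', h⟩ := h
          have hij : i ≠ j := fun h => hi (h ▸ hjD)
          exact hLd i j hij t ht t' ⟨ht'.1, ht'.2.trans hτ.2⟩ h.symm
      obtain ⟨τ, hτ, w', hw'τ, hw'0, hw'U, hw'K, hw'w, hLw, hLw'⟩ :=
        RT.star_step (Finset.insertNone D) φ U hU w K hK hwK hwU
          (fun j hj l hl c hc h => (hwK' j hj l hl c hc h).1) (L i) (hL i) (hL0 i) hLK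
          (by rw [hφ0]; exact hLa i)
          (by
            obtain ⟨t, ht, h⟩ := hφL (L i 1) (Finset.mem_image_of_mem _ (Finset.mem_univ i))
            exact ⟨none, by simp, t, ht, 1, h01, by rw [hwn, h]⟩)
      have hmem : ∀ j, j ∈ Finset.insertNone (insert i D) →
          j = some i ∨ (j ∈ Finset.insertNone D ∧ j ≠ some i) := by
        rintro (_ | j) hj
        · right; simp
        · by_cases hji : j = i
          · left; rw [hji]
          · right
            refine ⟨?_, by simpa using hji⟩
            simpa [hji] using hj
      refine ⟨Function.update w (some i) w', Function.update K (some i) (L i '' Icc 0 τ),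
        by simp [hwn], by simp [hKn], ?_, ?_, ?_, ?_, ?_, ?_, ?_⟩
      · intro j hj
        rcases hmem j hj with rfl | ⟨hj, hji⟩
        · rw [Function.update_self]
          exact (isCompact_Icc.image (hL i)).isClosed
        · rw [Function.update_of_ne hji]; exact hK j hj
      · intro j hj
        rcases hmem j hj with rfl | ⟨hj, hji⟩
        · rw [Function.update_self, Function.update_self, hw'τ]
          exact ⟨τ, ⟨hτ.1.le, le_rfl⟩, rfl⟩
        · rw [Function.update_of_ne hji, Function.update_of_ne hji]; exact hwK j hj
      · intro j hj
        rcases hmem j hj with rfl | ⟨hj, hji⟩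
        · rwa [Function.update_self]
        · rw [Function.update_of_ne hji]; exact hw0 j hj
      · intro j hj
        rcases hmem j hj with rfl | ⟨hj, hji⟩
        · rwa [Function.update_self]
        · rw [Function.update_of_ne hji]; exact hwU j hj
      · intro j hj l hl c hc h
        rcases hmem j hj with rfl | ⟨hj, hji⟩ <;> rcases hmem l hl with rfl | ⟨hl, hli⟩
        · rw [Function.update_self, Function.update_self] at h
          obtain ⟨t, ht, h⟩ := h
          exact ⟨hLw' c hc t ht h, rfl⟩
        · rw [Function.update_self, Function.update_of_ne hli] at h
          obtain ⟨t, ht, h⟩ := h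
          exact (hLw l hl c hc t ht h).elim
        · rw [Function.update_self, Function.update_of_ne hji] at h
          exact (hw'K j hj c hc h).elim
        · rw [Function.update_of_ne hli, Function.update_of_ne hji] at h
          exact hwK' j hj l hl c hc h
      · intro j hj l hl hjl c hc c' hc' h
        rcases hmem j hj with rfl | ⟨hj, hji⟩ <;> rcases hmem l hl with rfl | ⟨hl, hli⟩
        · exact (hjl rfl).elim
        · rw [Function.update_self, Function.update_of_ne hli] at h
          exact hw'w l hl c hc c' hc' h
        · rw [Function.update_self, Function.update_of_ne hji] at h
          have := hw'w j hj c' hc' c hc h.symm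
          rw [this, zero_smul] at h
          exact (smul_eq_zero.1 h).resolve_right (hw0 j hj)
        · rw [Function.update_of_ne hli, Function.update_of_ne hji] at h
          exact hww j hj l hl hjl c hc c' hc' h
      · intro j hj
        rcases Finset.mem_insert.1 hj with rfl | hj
        · exact ⟨τ, hτ, by rw [Function.update_self], by rw [Function.update_self, hw'τ]⟩
        · have hji : (some j : Option ι) ≠ some i := by
            intro h; exact hi ((Option.some_injective _ h) ▸ hj)
          rw [Function.update_of_ne hji, Function.update_of_ne hji]
          exact hD j hj
  obtain ⟨w, K, hwn, hKn, hK, hwK, hw0, hwU, hwK', hww, hD⟩ := key Finset.univ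
  have hm : ∀ i : ι, (some i) ∈ Finset.insertNone (Finset.univ : Finset ι) := by simp
  choose! τ hτ hKτ hφτ using hD
  refine ⟨fun i => ((fun c : ℝ => φ (c • w (some i))) '' Icc 0 1) ∪ K (some i), ?_, ?_, ?_⟩
  · intro i
    have h1 : RT.IsArcSet ((fun c : ℝ => φ (c • w (some i))) '' Icc 0 1) a (L i (τ i)) := by
      have := RT.arc_of_fun (fun c : ℝ => φ (c • w (some i))) (by fun_prop) zero_lt_one
        (φ.injective.comp (smul_left_injective ℝ (hw0 _ (hm i)))).injOn
      simpa [hφ0, hφτ i (Finset.mem_univ i)] using this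
    have h2 : RT.IsArcSet (K (some i)) (L i 0) (L i (τ i)) := by
      rw [hKτ i (Finset.mem_univ i)]
      exact RT.arc_of_fun (L i) (hL i) (hτ i (Finset.mem_univ i)).1
        ((hLi i).mono (Icc_subset_Icc le_rfl (hτ i (Finset.mem_univ i)).2))
    refine h1.trans h2.symm ?_
    rintro _ ⟨c, hc, rfl⟩ h
    have := (hwK' _ (hm i) _ (hm i) c hc h).1
    simp only [this, one_smul]
    exact hφτ i (Finset.mem_univ i)
  · rintro i x (⟨c, hc, rfl⟩ | h)
    · left; exact hwU _ (hm i) c hc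
    · rw [hKτ i (Finset.mem_univ i)] at h
      obtain ⟨t, ht, rfl⟩ := h
      rcases ht.1.eq_or_lt with h0 | h0
      · right; rw [← h0]
      · left; exact hLU i t ⟨h0, ht.2.trans (hτ i (Finset.mem_univ i)).2⟩
  · rintro i j hij x hi hj
    have hij' : (some i : Option ι) ≠ some j := fun h => hij (Option.some_injective _ h)
    rcases hi with ⟨c, hc, rfl⟩ | hi <;> rcases hj with ⟨c', hc', hj⟩ | hj
    · have := hww _ (hm i) _ (hm j) hij' c hc c' hc' (φ.injective hj.symm)
      simp [this, hφ0]
    · exact (hij' (hwK' _ (hm j) _ (hm i) c hc hj).2).elim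
    · rw [← hj] at hi
      exact (hij' (hwK' _ (hm i) _ (hm j) c' hc' hi).2.symm).elim
    · rw [hKτ i (Finset.mem_univ i)] at hi
      rw [hKτ j (Finset.mem_univ j)] at hj
      obtain ⟨t, ht, rfl⟩ := hi
      obtain ⟨t', ht', h⟩ := hj
      exact (hLd i j hij t ⟨ht.1, ht.2.trans (hτ i (Finset.mem_univ i)).2⟩ t'
        ⟨ht'.1, ht'.2.trans (hτ j (Finset.mem_univ j)).2⟩ h.symm).elim

/-- Star with prescribed accessible boundary points. -/
theorem RT.star_bdry {ι : Type*} [Fintype ι] {U : Set (EuclideanSpace ℝ (Fin 2))} (hU : IsOpen U)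
    (hUc : IsPreconnected U) {a : EuclideanSpace ℝ (Fin 2)} (ha : a ∈ U)
    (x c : ι → EuclideanSpace ℝ (Fin 2)) (hx : Function.Injective x) (hxU : ∀ i, x i ∉ U)
    (hacc : ∀ i, ∀ t ∈ Ioc (0 : ℝ) 1, x i + t • (c i - x i) ∈ U) :
    ∃ S : ι → Set (EuclideanSpace ℝ (Fin 2)), (∀ i, RT.IsArcSet (S i) a (x i)) ∧
      (∀ i, ∀ z ∈ S i, z ∈ U ∨ z = x i) ∧
      (∀ i j, i ≠ j → ∀ z, z ∈ S i → z ∈ S j → z = a) := by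
  classical
  have hcx : ∀ i, c i - x i ≠ 0 := by
    intro i h
    have := hacc i 1 (by simp)
    rw [h, smul_zero, add_zero] at this
    exact hxU i this
  -- uniform small parameter
  have hlim : ∀ i, Tendsto (fun z : ℝ × ℝ => x i + (z.1 * z.2) • (c i - x i))
      (𝓝 (0, 0)) (𝓝 (x i)) := by
    intro i
    have : Continuous (fun z : ℝ × ℝ => x i + (z.1 * z.2) • (c i - x i)) := by fun_prop
    simpa using this.tendsto (0, 0)
  have hlim' : ∀ i, ∀ O : Set (EuclideanSpace ℝ (Fin 2)), IsOpen O → x i ∈ O →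
      ∀ᶠ δ in 𝓝 (0 : ℝ), ∀ t ∈ Icc (0 : ℝ) 1, x i + (t * δ) • (c i - x i) ∈ O := by
    intro i O hO hxO
    refine isCompact_Icc.eventually_forall_of_forall_eventually fun t ht => ?_
    have : Continuous (fun z : ℝ × ℝ => x i + (z.2 * z.1) • (c i - x i)) := by fun_prop
    refine this.continuousAt.eventually (hO.mem_nhds ?_)
    simpa using hxO
  have hA : ∀ᶠ δ in 𝓝 (0 : ℝ), ∀ i, ∀ t ∈ Icc (0 : ℝ) 1, x i + (t * δ) • (c i - x i) ≠ a := by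
    rw [eventually_all]
    intro i
    exact hlim' i {a}ᶜ isOpen_compl_singleton fun h => hxU i (by rw [mem_singleton_iff.1 h]; exact ha)
  have hB : ∀ᶠ δ in 𝓝 (0 : ℝ), ∀ i j, i ≠ j → ∀ t ∈ Icc (0 : ℝ) 1, ∀ t' ∈ Icc (0 : ℝ) 1,
      x i + (t * δ) • (c i - x i) ≠ x j + (t' * δ) • (c j - x j) := by
    rw [eventually_all]; intro i
    rw [eventually_all]; intro j
    by_cases hij : i = j
    · exact Eventually.of_forall fun δ h => (h hij).elim
    obtain ⟨u, v, hu, hv, hxu, hxv, huv⟩ := t2_separation fun h => hij (hx h)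
    filter_upwards [hlim' i u hu hxu, hlim' j v hv hxv] with δ h1 h2 _ t ht t' ht' h
    exact disjoint_left.1 huv (h1 t ht) (h ▸ h2 t' ht')
  have hpos : Ioc (0 : ℝ) 1 ∈ 𝓝[>] (0 : ℝ) := Ioc_mem_nhdsGT zero_lt_one
  obtain ⟨δ, ⟨hδA, hδB⟩, hδ⟩ := (((hA.and hB).filter_mono nhdsWithin_le_nhds).and hpos).exists
  obtain ⟨S, h1, h2, h3⟩ := RT.star hU hUc ha (fun i t => x i + (t * δ) • (c i - x i))
    (fun i => by fun_prop)
    (fun i t _ t' _ h => by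
      have h' : (t * δ) • (c i - x i) = (t' * δ) • (c i - x i) := add_left_cancel h
      exact mul_right_cancel₀ hδ.1.ne' (smul_left_injective ℝ (hcx i) h'))
    (fun i => by simpa using hxU i)
    (fun i t ht => hacc i _ ⟨mul_pos ht.1 hδ.1, mul_le_one₀ ht.2 hδ.1.le hδ.2⟩)
    hδB hδA
  refine ⟨S, ?_, ?_, h3⟩
  · simpa using h1
  · simpa using h2

theorem RT.hull {Q K : Set (EuclideanSpace ℝ (Fin 2))} (hQ : IsOpen Q) (hQc : IsPathConnected Q)
    (hK : IsCompact K) (hKQ : K ⊆ Q) {a : EuclideanSpace ℝ (Fin 2)} (ha : a ∈ Q) :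
    ∃ C : Set (EuclideanSpace ℝ (Fin 2)), IsCompact C ∧ IsPreconnected C ∧ a ∈ C ∧ C ⊆ Q ∧
      K ⊆ C := by
  refine hK.induction_on (p := fun s => ∃ C : Set (EuclideanSpace ℝ (Fin 2)), IsCompact C ∧
    IsPreconnected C ∧ a ∈ C ∧ C ⊆ Q ∧ s ⊆ C) ?_ ?_ ?_ ?_
  · exact ⟨{a}, isCompact_singleton, isPreconnected_singleton, rfl, by simpa using ha, by simp⟩
  · rintro s t hst ⟨C, h1, h2, h3, h4, h5⟩
    exact ⟨C, h1, h2, h3, h4, hst.trans h5⟩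
  · rintro s t ⟨C, h1, h2, h3, h4, h5⟩ ⟨C', h1', h2', h3', h4', h5'⟩
    exact ⟨C ∪ C', h1.union h1', h2.union a h3 h3' h2', Or.inl h3, union_subset h4 h4',
      union_subset_union h5 h5'⟩
  · intro x hx
    obtain ⟨r, hr, hb⟩ := Metric.nhds_basis_closedBall.mem_iff.1 (hQ.mem_nhds (hKQ hx))
    obtain ⟨γ, hγ⟩ := hQc.joinedIn a ha x (hKQ hx)
    refine ⟨Metric.closedBall x r, mem_nhdsWithin_of_mem_nhds (Metric.closedBall_mem_nhds x hr),
      Set.range γ ∪ Metric.closedBall x r, ?_, ?_, ?_, ?_, subset_union_right⟩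
    · exact (isCompact_range γ.continuous).union (isCompact_closedBall x r)
    · refine IsPreconnected.union x ⟨1, γ.target⟩ (Metric.mem_closedBall_self hr.le)
        (isPreconnected_range γ.continuous) Metric.isPreconnected_closedBall
    · exact Or.inl ⟨0, γ.source⟩
    · refine union_subset ?_ hb
      rintro _ ⟨t, rfl⟩
      exact hγ t

theorem RT.nbhd_preconnected {C : Set (EuclideanSpace ℝ (Fin 2))} (hC : IsPreconnected C)
    {a : EuclideanSpace ℝ (Fin 2)} (ha : a ∈ C) {ρ : ℝ} (hρ : 0 < ρ) :
    IsPreconnected {x | Metric.infDist x C < ρ} := by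
  have hne : C.Nonempty := ⟨a, ha⟩
  refine isPreconnected_of_forall a fun y hy => ?_
  obtain ⟨c, hc, hyc⟩ := (Metric.infDist_lt_iff hne).1 hy
  refine ⟨C ∪ Metric.ball c ρ, ?_, Or.inl ha, Or.inr hyc, ?_⟩
  · rintro z (hz | hz)
    · change Metric.infDist z C < ρ
      rwa [Metric.infDist_zero_of_mem hz]
    · exact (Metric.infDist_lt_iff hne).2 ⟨c, hc, hz⟩
  · exact IsPreconnected.union c hc (Metric.mem_ball_self hρ) hC Metric.isPreconnected_ball

/-- an interval between two visited regions, avoiding all regions in between -/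
def RT.Piece {W : Type*} (f : W → ℝ → ℝ) (ρ : ℝ) (p q : W) (s t : ℝ) : Prop :=
  0 ≤ s ∧ s < t ∧ t ≤ 1 ∧ f p s = ρ ∧ f q t = ρ ∧ ∀ r ∈ Ioo s t, ∀ w, ρ < f w r

theorem RT.Piece.le {W : Type*} {f : W → ℝ → ℝ} (hf : ∀ w, Continuous (f w)) {ρ : ℝ}
    {s t : ℝ} (hst : s < t) (h : ∀ r ∈ Ioo s t, ∀ w, ρ < f w r) : ∀ r ∈ Icc s t, ∀ w, ρ ≤ f w r := by
  intro r hr w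
  have hcl : IsClosed {r | ρ ≤ f w r} := isClosed_le continuous_const (hf w)
  have : closure (Ioo s t) ⊆ {r | ρ ≤ f w r} := closure_minimal (fun r hr => (h r hr w).le) hcl
  rw [closure_Ioo hst.ne] at this
  exact this hr

theorem RT.exists_tree {W : Type*} [Finite W] (V : Set W) (f : W → ℝ → ℝ)
    (hf : ∀ w, Continuous (f w)) (ρ : ℝ) (hV : ∀ w ∈ V, ∃ t ∈ Icc (0 : ℝ) 1, f w t ≤ ρ)
    (hV' : ∀ w, ∀ t ∈ Icc (0 : ℝ) 1, f w t ≤ ρ → w ∈ V)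
    (hd : ∀ w w', w ≠ w' → ∀ t, f w t ≤ ρ → f w' t ≤ ρ → False) :
    ∃ T : SimpleGraph W, (∀ p q, T.Adj p q → p ≠ q ∧ p ∈ V ∧ q ∈ V ∧
      ∃ s t, RT.Piece f ρ p q s t ∨ RT.Piece f ρ q p s t) ∧
      (V.Nonempty → (T.induce V).IsTree) := by
  classical
  by_cases hne : V.Nonempty
  swap
  · exact ⟨⊥, by simp, fun h => (hne h).elim⟩
  let H : SimpleGraph V :=
    { Adj := fun p q => p ≠ q ∧ ∃ s t, RT.Piece f ρ p.1 q.1 s t ∨ RT.Piece f ρ q.1 p.1 s t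
      symm := ⟨fun p q ⟨h, s, t, h'⟩ => ⟨h.symm, s, t, h'.symm⟩⟩
      loopless := ⟨fun p h => h.1 rfl⟩ }
  have hpre : H.Preconnected := by
    intro p q
    by_contra hcon
    set S : Set W := {w | ∃ hw : w ∈ V, H.Reachable p ⟨w, hw⟩} with hS
    have hclosed : ∀ A : Set W, IsCompact (Icc (0 : ℝ) 1 ∩ ⋃ w ∈ A, {t | f w t ≤ ρ}) := by
      intro A
      refine isCompact_Icc.inter_right ?_
      exact (Set.toFinite A).isClosed_biUnion fun w _ => isClosed_le (hf w) continuous_const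
    obtain ⟨tp, htp, hfp⟩ := hV p p.2
    obtain ⟨tq, htq, hfq⟩ := hV q q.2
    have hpS : p.1 ∈ S := ⟨p.2, SimpleGraph.Reachable.refl _⟩
    have hqS : q.1 ∈ V \ S := ⟨q.2, fun ⟨_, h⟩ => hcon h⟩
    obtain ⟨⟨x, y⟩, ⟨hx, hy⟩, hmin⟩ := ((hclosed S).prod (hclosed (V \ S))).exists_isMinOn
      ⟨(tp, tq), ⟨htp, mem_biUnion hpS hfp⟩, ⟨htq, mem_biUnion hqS hfq⟩⟩
      (f := fun z : ℝ × ℝ => |z.1 - z.2|) (by fun_prop)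
    obtain ⟨hxI, hx⟩ := hx
    obtain ⟨hyI, hy⟩ := hy
    simp only [mem_iUnion, mem_ofPred_eq, exists_prop] at hx hy
    obtain ⟨w₁, hw₁, hx⟩ := hx
    obtain ⟨w₂, hw₂, hy⟩ := hy
    obtain ⟨hw₁V, hw₁r⟩ := hw₁
    have hw12 : w₁ ≠ w₂ := by
      rintro rfl
      exact hw₂.2 ⟨hw₁V, hw₁r⟩
    have hxy : x ≠ y := by
      rintro rfl
      exact hd _ _ hw12 _ hx hy
    have hbet : ∀ r ∈ Icc (0 : ℝ) 1, |r - y| < |x - y| → |x - r| < |x - y| → ∀ w, ρ < f w r := by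
      intro r hr h1 h2 w
      by_contra hw
      push Not at hw
      have hwV := hV' w r hr hw
      by_cases hwS : w ∈ S
      · have := hmin (show (r, y) ∈ _ from ⟨⟨hr, mem_biUnion hwS hw⟩, ⟨hyI, mem_biUnion hw₂ hy⟩⟩)
        simp only [mem_ofPred_eq] at this
        linarith
      · have := hmin (show (x, r) ∈ _ from
          ⟨⟨hxI, mem_biUnion (show w₁ ∈ S from ⟨hw₁V, hw₁r⟩) hx⟩,
          ⟨hr, mem_biUnion (show w ∈ V \ S from ⟨hwV, hwS⟩) hw⟩⟩)
        simp only [mem_ofPred_eq] at this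
        linarith
    have hadj : H.Adj ⟨w₁, hw₁V⟩ ⟨w₂, hw₂.1⟩ := by
      refine ⟨fun h => hw12 (congrArg Subtype.val h), ?_⟩
      rcases lt_or_gt_of_ne hxy with hlt | hlt
      · refine ⟨x, y, Or.inl ?_⟩
        have hio : ∀ r ∈ Ioo x y, ∀ w, ρ < f w r := by
          intro r hr
          refine hbet r ⟨hxI.1.trans hr.1.le, hr.2.le.trans hyI.2⟩ ?_ ?_
          · rw [abs_of_neg (by linarith [hr.2]), abs_of_neg (by linarith)]; linarith [hr.1]
          · rw [abs_of_neg (by linarith [hr.1]), abs_of_neg (by linarith)]; linarith [hr.2]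
        have hle := RT.Piece.le hf hlt hio
        exact ⟨hxI.1, hlt, hyI.2, le_antisymm hx (hle x ⟨le_rfl, hlt.le⟩ _),
          le_antisymm hy (hle y ⟨hlt.le, le_rfl⟩ _), hio⟩
      · refine ⟨y, x, Or.inr ?_⟩
        have hio : ∀ r ∈ Ioo y x, ∀ w, ρ < f w r := by
          intro r hr
          refine hbet r ⟨hyI.1.trans hr.1.le, hr.2.le.trans hxI.2⟩ ?_ ?_
          · rw [abs_of_pos (by linarith [hr.1]), abs_of_pos (by linarith)]; linarith [hr.2]
          · rw [abs_of_pos (by linarith [hr.2]), abs_of_pos (by linarith)]; linarith [hr.1]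
        have hle := RT.Piece.le hf hlt hio
        exact ⟨hyI.1, hlt, hxI.2, le_antisymm hy (hle y ⟨le_rfl, hlt.le⟩ _),
          le_antisymm hx (hle x ⟨hlt.le, le_rfl⟩ _), hio⟩
    exact hw₂.2 ⟨hw₂.1, hw₁r.trans hadj.reachable⟩
  have : Nonempty V := hne.to_subtype
  have hconn : H.Connected := ⟨hpre⟩
  obtain ⟨T', hle, hT'⟩ := hconn.exists_isTree_le
  refine ⟨T'.map (Function.Embedding.subtype _), ?_, ?_⟩
  · intro p q h
    obtain ⟨p', q', h', rfl, rfl⟩ := (SimpleGraph.map_adj _ _ _ _).1 h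
    obtain ⟨h1, s, t, h2⟩ := hle h'
    exact ⟨fun h => h1 (Subtype.ext h), p'.2, q'.2, s, t, h2⟩
  · intro _
    have : (T'.map (Function.Embedding.subtype (· ∈ V))).induce V = T' :=
      SimpleGraph.comap_map_eq _ _
    rw [this]
    exact hT'

theorem RT.piece_eq {W : Type*} {f : W → ℝ → ℝ} {ρ : ℝ}
    (hd : ∀ w w', w ≠ w' → ∀ t, f w t ≤ ρ → f w' t ≤ ρ → False)
    (hgen : ∀ w, ∀ q1 q2 : ℚ, ρ ≠ sInf (f w '' Icc (q1 : ℝ) q2))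
    {p q p' q' : W} {s t s' t' r : ℝ} (h : RT.Piece f ρ p q s t) (h' : RT.Piece f ρ p' q' s' t')
    (hr : r ∈ Icc s t) (hr' : r ∈ Icc s' t') : s = s' ∧ t = t' ∧ p = p' ∧ q = q' := by
  have key : ∀ {p q p' q' : W} {s t s' t' r : ℝ}, RT.Piece f ρ p q s t → RT.Piece f ρ p' q' s' t' →
      r ∈ Icc s t → r ∈ Icc s' t' → s < s' → False := by
    rintro p q p' q' s t s' t' r ⟨h0, h1, h2, h3, h4, h5⟩ ⟨h0', h1', h2', h3', h4', h5'⟩ hr hr' hlt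
    rcases lt_or_eq_of_le (hr'.1.trans hr.2) with h | h
    · exact absurd h3' (h5 s' ⟨hlt, h⟩ p').ne'
    · subst h
      have hqp : p' = q := by
        by_contra hne
        exact hd _ _ hne _ h3'.le h4.le
      subst hqp
      obtain ⟨q1, hq1, hq1'⟩ := exists_rat_btwn h1
      obtain ⟨q2, hq2, hq2'⟩ := exists_rat_btwn h1'
      have hl : IsLeast (f p' '' Icc (q1 : ℝ) q2) ρ := by
        refine ⟨⟨s', ⟨hq1'.le, hq2.le⟩, h3'⟩, ?_⟩
        rintro _ ⟨x, hx, rfl⟩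
        rcases lt_trichotomy x s' with h | h | h
        · exact (h5 x ⟨hq1.trans_le hx.1, h⟩ p').le
        · rw [h, h3']
        · exact (h5' x ⟨h, hx.2.trans_lt hq2'⟩ p').le
      exact hgen p' q1 q2 hl.csInf_eq.symm
  have hs : s = s' := by
    rcases lt_trichotomy s s' with h1 | h1 | h1
    · exact (key h h' hr hr' h1).elim
    · exact h1
    · exact (key h' h hr' hr h1).elim
  obtain ⟨h0, h1, h2, h3, h4, h5⟩ := h
  obtain ⟨h0', h1', h2', h3', h4', h5'⟩ := h'
  subst hs
  have ht : t = t' := by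
    rcases lt_trichotomy t t' with h | h | h
    · exact absurd h4 (h5' t ⟨h1, h⟩ q).ne'
    · exact h
    · exact absurd h4' (h5 t' ⟨h1', h⟩ q').ne'
  subst ht
  refine ⟨rfl, rfl, ?_, ?_⟩
  · by_contra hne
    exact hd _ _ hne _ h3.le h3'.le
  · by_contra hne
    exact hd _ _ hne _ h4.le h4'.le

set_option maxHeartbeats 1000000 in
theorem RT.arcs {W I Edge : Type*} [Finite Edge]
    (a : W → EuclideanSpace ℝ (Fin 2)) (C : W → Set (EuclideanSpace ℝ (Fin 2)))
    (hC : ∀ w, IsCompact (C w)) (hCc : ∀ w, IsPreconnected (C w)) (haC : ∀ w, a w ∈ C w)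
    (g : I → ℝ → EuclideanSpace ℝ (Fin 2)) (hg : ∀ i, Continuous (g i))
    (hgi : ∀ i, Function.Injective (g i))
    {ρ : ℝ} (hρ : 0 < ρ)
    (hdisj : ∀ w w', w ≠ w' → ∀ x, Metric.infDist x (C w) ≤ ρ → Metric.infDist x (C w') ≤ ρ → False)
    (hcross : ∀ i j, i ≠ j → ∀ t ∈ Icc (0 : ℝ) 1, ∀ t' ∈ Icc (0 : ℝ) 1, g i t = g j t' →
      ∃ w, Metric.infDist (g i t) (C w) < ρ)
    (hgen : ∀ i w, ∀ q1 q2 : ℚ, ρ ≠ sInf ((fun t => Metric.infDist (g i t) (C w)) '' Icc (q1 : ℝ) q2))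
    (ix : Edge → I) (P Q : Edge → W) (s t : Edge → ℝ) (hPQ : ∀ ε, P ε ≠ Q ε)
    (hpiece : ∀ ε, RT.Piece (fun w r => Metric.infDist (g (ix ε) r) (C w)) ρ (P ε) (Q ε) (s ε) (t ε))
    (hinj : ∀ ε ε', ix ε = ix ε' → P ε = P ε' → Q ε = Q ε' → ε = ε') :
    ∃ Arc : Edge → Set (EuclideanSpace ℝ (Fin 2)),
      (∀ ε, RT.IsArcSet (Arc ε) (a (P ε)) (a (Q ε))) ∧
      (∀ ε, ∀ z ∈ Arc ε, (∃ r ∈ Icc (0 : ℝ) 1, g (ix ε) r = z) ∨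
        Metric.infDist z (C (P ε)) ≤ ρ ∨ Metric.infDist z (C (Q ε)) ≤ ρ) ∧
      (∀ ε w, a w ∈ Arc ε → w = P ε ∨ w = Q ε) ∧
      (∀ ε ε', ε ≠ ε' → ∀ z, z ∈ Arc ε → z ∈ Arc ε' →
        ∃ w, (w = P ε ∨ w = Q ε) ∧ (w = P ε' ∨ w = Q ε') ∧ z = a w) := by
  classical
  have := Fintype.ofFinite Edge
  have hfc : ∀ i w, Continuous fun r => Metric.infDist (g i r) (C w) := fun i w =>
    (Metric.continuous_infDist_pt _).comp (hg i)
  let core : Edge → Set (EuclideanSpace ℝ (Fin 2)) := fun ε => g (ix ε) '' Icc (s ε) (t ε)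
  have hcored : ∀ ε, ∀ z ∈ core ε, ∀ w, ρ ≤ Metric.infDist z (C w) := by
    rintro ε _ ⟨r, hr, rfl⟩ w
    obtain ⟨h0, h1, h2, h3, h4, h5⟩ := hpiece ε
    exact RT.Piece.le (f := fun w r => Metric.infDist (g (ix ε) r) (C w)) (hfc _) h1 h5 r hr w
  have hsub : ∀ ε, Icc (s ε) (t ε) ⊆ Icc 0 1 := fun ε =>
    Icc_subset_Icc (hpiece ε).1 (hpiece ε).2.2.1
  have hcore : ∀ ε ε' z, z ∈ core ε → z ∈ core ε' → ε = ε' := by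
    rintro ε ε' _ ⟨r, hr, rfl⟩ hz'
    have hz : g (ix ε) r ∈ core ε := ⟨r, hr, rfl⟩
    obtain ⟨r', hr', hrr⟩ := hz'
    have hi : ix ε = ix ε' := by
      by_contra hne
      obtain ⟨w, hw⟩ := hcross _ _ hne r (hsub ε hr) r' (hsub ε' hr') hrr.symm
      exact absurd (hcored ε _ hz w) (not_le.2 hw)
    rw [← hi] at hrr
    have := hgi _ hrr
    subst this
    have hp' := hpiece ε'
    rw [← hi] at hp'
    obtain ⟨-, -, h3, h4⟩ := RT.piece_eq (f := fun w r => Metric.infDist (g (ix ε) r) (C w))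
      (fun w w' hne t => hdisj w w' hne _) (fun w => hgen (ix ε) w) (hpiece ε) hp' hr hr'
    exact hinj _ _ hi h3 h4
  let vtx : Edge × Bool → W := fun h => if h.2 then Q h.1 else P h.1
  let tm : Edge × Bool → ℝ := fun h => if h.2 then t h.1 else s h.1
  let pt : Edge × Bool → EuclideanSpace ℝ (Fin 2) := fun h => g (ix h.1) (tm h)
  have hst : ∀ ε, s ε < t ε := fun ε => (hpiece ε).2.1
  have htm : ∀ h, tm h ∈ Icc (s h.1) (t h.1) := by
    rintro ⟨ε, _ | _⟩
    · exact ⟨le_rfl, (hst ε).le⟩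
    · exact ⟨(hst ε).le, le_rfl⟩
  have hptcore : ∀ h, pt h ∈ core h.1 := fun h => ⟨_, htm h, rfl⟩
  have hptd : ∀ h, Metric.infDist (pt h) (C (vtx h)) = ρ := by
    rintro ⟨ε, _ | _⟩
    · exact (hpiece ε).2.2.2.1
    · exact (hpiece ε).2.2.2.2.1
  have hptinj : Function.Injective pt := by
    rintro ⟨ε, b⟩ ⟨ε', b'⟩ h
    have h1 : ε = ε' := hcore ε ε' (pt (ε, b)) (hptcore (ε, b)) (by rw [h]; exact hptcore (ε', b'))
    subst h1
    have h2 := hgi _ h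
    have h3 := hst ε
    cases b <;> cases b' <;> simp [tm] at h2 ⊢ <;> linarith
  have hstar : ∀ w, ∃ S : Edge × Bool → Set (EuclideanSpace ℝ (Fin 2)),
      (∀ h, vtx h = w → RT.IsArcSet (S h) (a w) (pt h)) ∧
      (∀ h, vtx h = w → ∀ z ∈ S h, Metric.infDist z (C w) < ρ ∨ z = pt h) ∧
      (∀ h h', vtx h = w → vtx h' = w → h ≠ h' → ∀ z, z ∈ S h → z ∈ S h' → z = a w) := by
    intro w
    have hne : (C w).Nonempty := ⟨_, haC w⟩
    choose c hcC hc using fun x => (hC w).exists_infDist_eq_dist hne x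
    obtain ⟨S, h1, h2, h3⟩ := RT.star_bdry (ι := {h : Edge × Bool // vtx h = w})
      (U := {x | Metric.infDist x (C w) < ρ})
      (isOpen_lt (Metric.continuous_infDist_pt _) continuous_const)
      (RT.nbhd_preconnected (hCc w) (haC w) hρ) (a := a w)
      (by change Metric.infDist (a w) (C w) < ρ; rwa [Metric.infDist_zero_of_mem (haC w)])
      (fun h => pt h.1) (fun h => c (pt h.1))
      (fun h h' hh => Subtype.ext (hptinj hh))
      (by
        rintro ⟨h, rfl⟩ hlt
        exact absurd (hptd h) (ne_of_lt hlt))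
      (by
        rintro ⟨h, rfl⟩ r hr
        refine (Metric.infDist_lt_iff hne).2 ⟨c (pt h), hcC _, ?_⟩
        have h1 : dist (pt h) (c (pt h)) = ρ := by rw [← hc, hptd]
        have h2 : pt h + r • (c (pt h) - pt h) - c (pt h) = (1 - r) • (pt h - c (pt h)) := by
          module
        rw [dist_eq_norm, h2, norm_smul, ← dist_eq_norm (pt h), h1, Real.norm_of_nonneg (by linarith [hr.2])]
        nlinarith [hr.1])
    refine ⟨fun h => if hh : vtx h = w then S ⟨h, hh⟩ else ∅, ?_, ?_, ?_⟩
    · intro h hh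
      simpa [hh] using h1 ⟨h, hh⟩
    · intro h hh z hz
      simp only [hh, dite_true] at hz
      exact h2 ⟨h, hh⟩ z hz
    · intro h h' hh hh' hne z hz hz'
      simp only [hh, hh', dite_true] at hz hz'
      exact h3 ⟨h, hh⟩ ⟨h', hh'⟩ (fun e => hne (congrArg Subtype.val e)) z hz hz'
  choose S' hS1 hS2 hS3 using hstar
  let Sh : Edge × Bool → Set (EuclideanSpace ℝ (Fin 2)) := fun h => S' (vtx h) h
  have hSarc : ∀ h, RT.IsArcSet (Sh h) (a (vtx h)) (pt h) := fun h => hS1 _ h rfl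
  have hSle : ∀ h, ∀ z ∈ Sh h, Metric.infDist z (C (vtx h)) ≤ ρ := by
    intro h z hz
    rcases hS2 _ h rfl z hz with h1 | h1
    · exact h1.le
    · rw [h1, hptd]
  have hScore : ∀ h ε z, z ∈ Sh h → z ∈ core ε → z = pt h ∧ h.1 = ε := by
    intro h ε z hz hz'
    rcases hS2 _ h rfl z hz with h1 | h1
    · exact absurd (hcored ε z hz' _) (not_le.2 h1)
    · exact ⟨h1, hcore _ _ z (h1 ▸ hptcore h) hz'⟩
  have hSS : ∀ h h' z, h ≠ h' → z ∈ Sh h → z ∈ Sh h' → vtx h = vtx h' ∧ z = a (vtx h) := by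
    intro h h' z hne hz hz'
    have hv : vtx h = vtx h' := by
      by_contra hv
      exact hdisj _ _ hv z (hSle h z hz) (hSle h' z hz')
    refine ⟨hv, hS3 (vtx h) h h' rfl hv.symm hne z hz ?_⟩
    rw [hv]; exact hz'
  have hvtx : ∀ ε b, vtx (ε, b) = P ε ∨ vtx (ε, b) = Q ε := by
    rintro ε (_ | _)
    · exact Or.inl rfl
    · exact Or.inr rfl
  have hmem : ∀ ε z, z ∈ (Sh (ε, false) ∪ core ε) ∪ Sh (ε, true) →
      z ∈ core ε ∨ ∃ b, z ∈ Sh (ε, b) := by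
    rintro ε z ((h | h) | h)
    · exact Or.inr ⟨_, h⟩
    · exact Or.inl h
    · exact Or.inr ⟨_, h⟩
  refine ⟨fun ε => (Sh (ε, false) ∪ core ε) ∪ Sh (ε, true), ?_, ?_, ?_, ?_⟩
  · intro ε
    have hc : RT.IsArcSet (core ε) (pt (ε, false)) (pt (ε, true)) :=
      RT.arc_of_fun (g (ix ε)) (hg _) (hst ε) ((hgi _).injOn)
    refine ((hSarc (ε, false)).trans hc ?_).trans (hSarc (ε, true)).symm ?_
    · intro z hz hz'
      exact (hScore _ _ z hz hz').1
    · rintro z (hz | hz) hz'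
      · exact absurd (hSS (ε, false) (ε, true) z (by simp) hz hz').1 (hPQ ε)
      · exact (hScore _ _ z hz' hz).1
  · intro ε z hz
    rcases hmem ε z hz with ⟨r, hr, rfl⟩ | ⟨b, hb⟩
    · exact Or.inl ⟨r, hsub ε hr, rfl⟩
    · right
      have := hSle _ z hb
      rcases hvtx ε b with h | h
      · left; rwa [← h]
      · right; rwa [← h]
  · intro ε w hw
    have h0 : Metric.infDist (a w) (C w) = 0 := Metric.infDist_zero_of_mem (haC w)
    rcases hmem ε _ hw with hc | ⟨b, hb⟩
    · exact absurd (hcored ε _ hc w) (by rw [h0]; exact not_le.2 hρ)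
    · have : w = vtx (ε, b) := by
        by_contra hne
        exact hdisj _ _ hne (a w) (by rw [h0]; exact hρ.le) (hSle _ _ hb)
      rw [this]; exact hvtx ε b
  · intro ε ε' hne z hz hz'
    rcases hmem ε z hz with hc | ⟨b, hb⟩ <;> rcases hmem ε' z hz' with hc' | ⟨b', hb'⟩
    · exact absurd (hcore _ _ z hc hc') hne
    · exact absurd (hScore _ _ z hb' hc).2.symm hne
    · exact absurd (hScore _ _ z hb hc').2 hne
    · obtain ⟨h1, h2⟩ := hSS (ε, b) (ε', b') z (fun h => hne (congrArg Prod.fst h)) hb hb'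
      exact ⟨_, hvtx ε b, h1 ▸ hvtx ε' b', h2⟩

theorem RT.geo {W I : Type*} [Finite W] [Finite I]
    (a : W → EuclideanSpace ℝ (Fin 2)) (C : W → Set (EuclideanSpace ℝ (Fin 2)))
    (hC : ∀ w, IsCompact (C w)) (hCc : ∀ w, IsPreconnected (C w)) (haC : ∀ w, a w ∈ C w)
    (g : I → ℝ → EuclideanSpace ℝ (Fin 2)) (hg : ∀ i, Continuous (g i))
    (hgi : ∀ i, Function.Injective (g i)) (O : I → Set (EuclideanSpace ℝ (Fin 2))) (V : I → Set W)
    {ρ : ℝ} (hρ : 0 < ρ)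
    (hVmem : ∀ i, ∀ w ∈ V i, ∃ t ∈ Icc (0 : ℝ) 1, g i t = a w)
    (hdisj : ∀ w w', w ≠ w' → ∀ x, Metric.infDist x (C w) ≤ ρ → Metric.infDist x (C w') ≤ ρ → False)
    (hV : ∀ i w, ∀ t ∈ Icc (0 : ℝ) 1, Metric.infDist (g i t) (C w) ≤ ρ → w ∈ V i)
    (hO : ∀ i, ∀ w ∈ V i, ∀ x, Metric.infDist x (C w) ≤ ρ → x ∈ O i)
    (hgO : ∀ i, ∀ t ∈ Icc (0 : ℝ) 1, g i t ∈ O i)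
    (hcross : ∀ i j, i ≠ j → ∀ t ∈ Icc (0 : ℝ) 1, ∀ t' ∈ Icc (0 : ℝ) 1, g i t = g j t' →
      ∃ w, Metric.infDist (g i t) (C w) < ρ)
    (hgen : ∀ i w, ∀ q1 q2 : ℚ,
      ρ ≠ sInf ((fun t => Metric.infDist (g i t) (C w)) '' Icc (q1 : ℝ) q2)) :
    ∃ (T : I → SimpleGraph W) (arc : I → Sym2 W → Set (EuclideanSpace ℝ (Fin 2))),
      (∀ i p q, (T i).Adj p q → p ∈ V i ∧ q ∈ V i) ∧
      (∀ i, (V i).Nonempty → ((T i).induce (V i)).IsTree) ∧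
      (∀ i p q, (T i).Adj p q → RT.IsArcSet (arc i s(p, q)) (a p) (a q) ∧ arc i s(p, q) ⊆ O i) ∧
      (∀ i, ∀ e ∈ (T i).edgeSet, ∀ w, a w ∈ arc i e → w ∈ e) ∧
      (∀ i j, ∀ e ∈ (T i).edgeSet, ∀ e' ∈ (T j).edgeSet, e ≠ e' → ∀ z, z ∈ arc i e → z ∈ arc j e' →
        ∃ w, w ∈ e ∧ w ∈ e' ∧ z = a w) := by
  classical
  have hT : ∀ i, ∃ T : SimpleGraph W, (∀ p q, T.Adj p q → p ≠ q ∧ p ∈ V i ∧ q ∈ V i ∧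
      ∃ s t, RT.Piece (fun w r => Metric.infDist (g i r) (C w)) ρ p q s t ∨
        RT.Piece (fun w r => Metric.infDist (g i r) (C w)) ρ q p s t) ∧
      ((V i).Nonempty → (T.induce (V i)).IsTree) := by
    intro i
    refine RT.exists_tree (V i) (fun w r => Metric.infDist (g i r) (C w))
      (fun w => (Metric.continuous_infDist_pt _).comp (hg i)) ρ ?_ (hV i)
      (fun w w' hne t => hdisj w w' hne _)
    intro w hw
    obtain ⟨t, ht, hgt⟩ := hVmem i w hw
    refine ⟨t, ht, ?_⟩
    rw [hgt, Metric.infDist_zero_of_mem (haC w)]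
    exact hρ.le
  choose T hT1 hT2 using hT
  have hE : ∀ ε : {z : I × Sym2 W // z.2 ∈ (T z.1).edgeSet}, ∃ (P Q : W) (s t : ℝ),
      ε.1.2 = s(P, Q) ∧
      RT.Piece (fun w r => Metric.infDist (g ε.1.1 r) (C w)) ρ P Q s t := by
    rintro ⟨⟨i, e⟩, he⟩
    induction e using Sym2.ind with
    | _ p q =>
      obtain ⟨-, -, -, s, t, h | h⟩ := hT1 i p q he
      · exact ⟨p, q, s, t, rfl, h⟩
      · exact ⟨q, p, s, t, Sym2.eq_swap, h⟩
  choose P Q s t he hpiece using hE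
  have hadj : ∀ ε, (T ε.1.1).Adj (P ε) (Q ε) := by
    intro ε
    have := ε.2
    rw [he ε] at this
    exact this
  obtain ⟨Arc, hA1, hA2, hA3, hA4⟩ := RT.arcs a C hC hCc haC g hg hgi hρ hdisj hcross hgen
    (fun ε : {z : I × Sym2 W // z.2 ∈ (T z.1).edgeSet} => ε.1.1) P Q s t
    (fun ε => (hadj ε).ne) hpiece (by
      intro ε ε' h1 h2 h3
      refine Subtype.ext (Prod.ext h1 ?_)
      rw [he ε, he ε', h2, h3])
  refine ⟨T, fun i e => if h : e ∈ (T i).edgeSet then Arc ⟨(i, e), h⟩ else ∅, ?_, hT2, ?_, ?_, ?_⟩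
  · intro i p q h
    exact ⟨(hT1 i p q h).2.1, (hT1 i p q h).2.2.1⟩
  · intro i p q h
    have h' : s(p, q) ∈ (T i).edgeSet := h
    simp only [h', dite_true]
    have h1 := hA1 ⟨(i, s(p, q)), h'⟩
    have h2 := hA2 ⟨(i, s(p, q)), h'⟩
    have h3 := he ⟨(i, s(p, q)), h'⟩
    have h4 := hT1 i _ _ (hadj ⟨(i, s(p, q)), h'⟩)
    constructor
    · rcases Sym2.eq_iff.1 h3 with ⟨h5, h6⟩ | ⟨h5, h6⟩
      · rw [← h5, ← h6] at h1
        exact h1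
      · rw [← h5, ← h6] at h1
        exact h1.symm
    · intro z hz
      rcases h2 z hz with ⟨r, hr, rfl⟩ | h5 | h5
      · exact hgO i r hr
      · exact hO i _ h4.2.1 z h5
      · exact hO i _ h4.2.2.1 z h5
  · intro i e h w hw
    simp only [h, dite_true] at hw
    have h3 := he ⟨(i, e), h⟩
    change e = _ at h3
    rw [h3, Sym2.mem_iff]
    exact hA3 _ w hw
  · intro i j e h e' h' hne z hz hz'
    simp only [h, h', dite_true] at hz hz'
    obtain ⟨w, h1, h2, h3⟩ := hA4 ⟨(i, e), h⟩ ⟨(j, e'), h'⟩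
      (fun hh => hne (congrArg (fun x => x.1.2) hh)) z hz hz'
    refine ⟨w, ?_, ?_, h3⟩
    · have h3 := he ⟨(i, e), h⟩
      change e = _ at h3
      rw [h3, Sym2.mem_iff]
      exact h1
    · have h3 := he ⟨(j, e'), h'⟩
      change e' = _ at h3
      rw [h3, Sym2.mem_iff]
      exact h2

theorem RT.mem_cth {C : Set (EuclideanSpace ℝ (Fin 2))} (hne : C.Nonempty)
    {ρ δ : ℝ} (h : ρ ≤ δ) {x : EuclideanSpace ℝ (Fin 2)}
    (hx : Metric.infDist x C ≤ ρ) : x ∈ Metric.cthickening δ C := by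
  rw [Metric.mem_cthickening_iff]
  rw [← ENNReal.ofReal_toReal (Metric.infEDist_ne_top hne)]
  exact ENNReal.ofReal_le_ofReal (hx.trans h)

theorem RT.eventually_avoid {C F : Set (EuclideanSpace ℝ (Fin 2))} (hC : IsCompact C)
    (hne : C.Nonempty) (hF : IsClosed F) (hCF : C ⊆ Fᶜ) :
    ∀ᶠ ρ in 𝓝[>] (0 : ℝ), ∀ x, Metric.infDist x C ≤ ρ → x ∉ F := by
  obtain ⟨δ, hδ, hsub⟩ := hC.exists_cthickening_subset_open hF.isOpen_compl hCF
  filter_upwards [Ioo_mem_nhdsGT hδ] with ρ hρ x hx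
  exact hsub (RT.mem_cth hne hρ.2.le hx)

theorem RT.eventually_disj {C D : Set (EuclideanSpace ℝ (Fin 2))} (hC : IsCompact C)
    (hne : C.Nonempty) (hD : IsClosed D) (hne' : D.Nonempty) (hCD : Disjoint C D) :
    ∀ᶠ ρ in 𝓝[>] (0 : ℝ), ∀ x, Metric.infDist x C ≤ ρ → Metric.infDist x D ≤ ρ → False := by
  obtain ⟨δ, hδ, hsub⟩ := hCD.exists_cthickenings hC hD
  filter_upwards [Ioo_mem_nhdsGT hδ] with ρ hρ x hx hx'
  exact disjoint_left.1 hsub (RT.mem_cth hne hρ.2.le hx) (RT.mem_cth hne' hρ.2.le hx')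

theorem RT.curve {W : Type*} [Finite W] {O : Set (EuclideanSpace ℝ (Fin 2))} (hO : IsOpen O)
    (hOc : IsPreconnected O) (hne : O.Nonempty) (V : Set W) (a : W → EuclideanSpace ℝ (Fin 2))
    (ha : ∀ w ∈ V, a w ∈ O) :
    ∃ g : ℝ → EuclideanSpace ℝ (Fin 2), Continuous g ∧ Function.Injective g ∧
      (∀ t ∈ Icc (0 : ℝ) 1, g t ∈ O) ∧ ∀ w ∈ V, ∃ t ∈ Icc (0 : ℝ) 1, g t = a w := by
  classical
  obtain ⟨y, hy⟩ := hne
  obtain ⟨y0, h0, y1, h1, h01⟩ := (infinite_of_mem_nhds y (hO.mem_nhds hy)).nontrivial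
  have hfin : (a '' V).Finite := (Set.toFinite V).image a
  obtain ⟨φ, e, he, hφ0, hφ1, hφ, hφs⟩ := RT.thread hO hOc h0 h1 h01
    ((hfin.toFinset.erase y0).erase y1) (by
      intro y hy
      simp only [Finset.mem_erase, Set.Finite.mem_toFinset] at hy
      obtain ⟨h2, h3, w, hw, rfl⟩ := hy
      exact ⟨ha w hw, h3, h2⟩)
  refine ⟨fun t => φ (t • e), by fun_prop, ?_, hφ, ?_⟩
  · intro t t' h
    exact smul_left_injective ℝ he (φ.injective h)
  · intro w hw
    by_cases hw0 : a w = y0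
    · exact ⟨0, by simp, by simp [hφ0, hw0]⟩
    by_cases hw1 : a w = y1
    · exact ⟨1, by simp, by simp [hφ1, hw1]⟩
    exact hφs (a w) (by
      simp only [Finset.mem_erase, Set.Finite.mem_toFinset]
      exact ⟨hw1, hw0, w, hw, rfl⟩)

theorem RT.core {W I : Type*} [Finite W] [Finite I]
    (a : W → EuclideanSpace ℝ (Fin 2)) (Q : W → Set (EuclideanSpace ℝ (Fin 2)))
    (O : I → Set (EuclideanSpace ℝ (Fin 2))) (V : I → Set W)
    (hO : ∀ i, IsOpen (O i)) (hOc : ∀ i, IsPathConnected (O i)) (haQ : ∀ w, a w ∈ Q w)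
    (hQc : ∀ w, IsPathConnected (Q w)) (hQd : ∀ w w', w ≠ w' → Disjoint (Q w) (Q w'))
    (hV : ∀ i, ∀ w ∈ V i, Q w ⊆ O i) (hV' : ∀ i w, ∀ x ∈ Q w, x ∈ O i → w ∈ V i)
    (hX : ∀ i j, i ≠ j → ∀ x ∈ O i, x ∈ O j → ∃ w, IsOpen (Q w) ∧ O i ∩ O j ⊆ Q w) :
    ∃ (T : I → SimpleGraph W) (arc : I → Sym2 W → Set (EuclideanSpace ℝ (Fin 2))),
      (∀ i p q, (T i).Adj p q → p ∈ V i ∧ q ∈ V i) ∧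
      (∀ i, (V i).Nonempty → ((T i).induce (V i)).IsTree) ∧
      (∀ i p q, (T i).Adj p q → RT.IsArcSet (arc i s(p, q)) (a p) (a q) ∧ arc i s(p, q) ⊆ O i) ∧
      (∀ i, ∀ e ∈ (T i).edgeSet, ∀ w, a w ∈ arc i e → w ∈ e) ∧
      (∀ i j, ∀ e ∈ (T i).edgeSet, ∀ e' ∈ (T j).edgeSet, e ≠ e' → ∀ z, z ∈ arc i e → z ∈ arc j e' →
        ∃ w, w ∈ e ∧ w ∈ e' ∧ z = a w) := by
  classical
  choose g hg hgi hgO hgV using fun i => RT.curve (hO i) (hOc i).isConnected.isPreconnected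
    (hOc i).nonempty (V i) a (fun w hw => hV i w hw (haQ w))
  have hγ : ∀ i, IsCompact (g i '' Icc (0 : ℝ) 1) := fun i => isCompact_Icc.image (hg i)
  have hCex : ∀ w, ∃ C : Set (EuclideanSpace ℝ (Fin 2)), IsCompact C ∧ IsPreconnected C ∧ a w ∈ C ∧
      C ⊆ Q w ∧ (IsOpen (Q w) → (⋃ p ∈ {p : I × I | p.1 ≠ p.2 ∧ O p.1 ∩ O p.2 ⊆ Q w},
        g p.1 '' Icc (0 : ℝ) 1 ∩ g p.2 '' Icc (0 : ℝ) 1) ⊆ C) := by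
    intro w
    by_cases ho : IsOpen (Q w)
    · obtain ⟨C, h1, h2, h3, h4, h5⟩ := RT.hull ho (hQc w)
        (K := ⋃ p ∈ {p : I × I | p.1 ≠ p.2 ∧ O p.1 ∩ O p.2 ⊆ Q w},
          g p.1 '' Icc (0 : ℝ) 1 ∩ g p.2 '' Icc (0 : ℝ) 1)
        ((Set.toFinite _).isCompact_biUnion fun p _ => (hγ p.1).inter (hγ p.2))
        (by
          refine iUnion₂_subset fun p hp => ?_
          rintro x ⟨⟨t, ht, rfl⟩, ⟨t', ht', h⟩⟩
          exact hp.2 ⟨hgO _ t ht, h ▸ hgO _ t' ht'⟩) (haQ w)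
      exact ⟨C, h1, h2, h3, h4, fun _ => h5⟩
    · exact ⟨{a w}, isCompact_singleton, isPreconnected_singleton, rfl, by simpa using haQ w,
        fun h => (ho h).elim⟩
  choose C hC hCc haC hCQ hCK using hCex
  have hne : ∀ w, (C w).Nonempty := fun w => ⟨_, haC w⟩
  have e1 : ∀ᶠ ρ in 𝓝[>] (0 : ℝ), ∀ w w', w ≠ w' → ∀ x, Metric.infDist x (C w) ≤ ρ →
      Metric.infDist x (C w') ≤ ρ → False := by
    refine eventually_all.2 fun w => eventually_all.2 fun w' => ?_
    by_cases h : w = w'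
    · exact Eventually.of_forall fun ρ h' => (h' h).elim
    · filter_upwards [RT.eventually_disj (hC w) (hne w) (hC w').isClosed (hne w')
        ((hQd w w' h).mono (hCQ w) (hCQ w'))] with ρ hρ _ using hρ
  have e2 : ∀ᶠ ρ in 𝓝[>] (0 : ℝ), ∀ i w, ∀ t ∈ Icc (0 : ℝ) 1, Metric.infDist (g i t) (C w) ≤ ρ →
      w ∈ V i := by
    refine eventually_all.2 fun i => eventually_all.2 fun w => ?_
    by_cases h : w ∈ V i
    · exact Eventually.of_forall fun ρ _ _ _ => h
    · filter_upwards [RT.eventually_avoid (hC w) (hne w) (hγ i).isClosed (by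
        rintro x hx ⟨t, ht, rfl⟩
        exact h (hV' i w _ (hCQ w hx) (hgO i t ht)))] with ρ hρ t ht hd
      exact (hρ _ hd ⟨t, ht, rfl⟩).elim
  have e3 : ∀ᶠ ρ in 𝓝[>] (0 : ℝ), ∀ i w, w ∈ V i → ∀ x, Metric.infDist x (C w) ≤ ρ →
      x ∈ O i := by
    refine eventually_all.2 fun i => eventually_all.2 fun w => ?_
    by_cases h : w ∈ V i
    · filter_upwards [RT.eventually_avoid (hC w) (hne w) (hO i).isClosed_compl (by
        rw [compl_compl]
        exact (hCQ w).trans (hV i w h))] with ρ hρ _ x hx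
      exact not_not.1 (hρ x hx)
    · exact Eventually.of_forall fun ρ h' => (h h').elim
  obtain ⟨δ, hδ, hsub⟩ := mem_nhdsGT_iff_exists_Ioo_subset.1 (e1.and (e2.and e3))
  let B : Set ℝ := Set.range fun p : (I × W) × (ℚ × ℚ) =>
    sInf ((fun t => Metric.infDist (g p.1.1 t) (C p.1.2)) '' Icc (p.2.1 : ℝ) p.2.2)
  have hB : B.Countable := Set.countable_range _
  obtain ⟨ρ, hρ, hρB⟩ := (hB.dense_compl ℝ).inter_open_nonempty _ isOpen_Ioo
    (nonempty_Ioo.2 (show (0 : ℝ) < δ from hδ))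
  obtain ⟨h1, h2, h3⟩ := hsub hρ
  refine RT.geo a C hC hCc haC g hg hgi O V hρ.1 hgV h1 h2 (fun i w hw => h3 i w hw) hgO ?_ ?_
  · intro i j hij t ht t' ht' h
    obtain ⟨w, hw, hsub⟩ := hX i j hij _ (hgO i t ht) (h ▸ hgO j t' ht')
    refine ⟨w, ?_⟩
    rw [Metric.infDist_zero_of_mem (hCK w hw (mem_iUnion₂.2 ⟨(i, j), ⟨hij, hsub⟩, ⟨t, ht, rfl⟩,
      ⟨t', ht', h.symm⟩⟩))]
    exact hρ.1
  · intro i w q1 q2 h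
    exact hρB ⟨((i, w), (q1, q2)), h.symm⟩

end RTsec

/-- **Proposition (redrawing, b = 1).** Under the hypotheses of the main theorem
(`f_{k+1}(𝒜) = 0`; each `k`-wise and `(k+1)`-wise intersection empty, a single point,
or open and path-connected), given a choice of pairwise distinct points
`a σ ∈ A_σ` for the `(k+1)`-element faces `σ` of the nerve, one can choose for every
`k`-element `τ` with `V_τ ≠ ∅` a tree `T τ` on the vertex set `V_τ = {a σ : σ ⊃ τ}`
together with a drawing of `T τ` inside `A_τ` such that the union graph `G = ⋃_τ T τ`
on the vertex set `W` is simple (each edge lies in a unique tree) and the union of the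
drawings is a crossing-free drawing of `G` inside `⋃ 𝒜`; in particular `G` is a simple
planar graph. -/
theorem redrawing_trees (k n : ℕ) (hk : 2 ≤ k)
    (A : Fin n → Set (EuclideanSpace ℝ (Fin 2)))
    (h1 : fNum A (k + 1) = 0)
    (h2 : ∀ σ : Finset (Fin n), σ.card = k ∨ σ.card = k + 1 →
      (⋂ i ∈ σ, A i) = ∅ ∨ (∃ p, (⋂ i ∈ σ, A i) = {p}) ∨
        (IsOpen (⋂ i ∈ σ, A i) ∧ IsPathConnected (⋂ i ∈ σ, A i)))
    (a : NerveTop A k → EuclideanSpace ℝ (Fin 2))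
    (ha : ∀ p : NerveTop A k, a p ∈ ⋂ i ∈ p.1, A i)
    (hainj : Function.Injective a) :
    ∃ (T : Finset (Fin n) → SimpleGraph (NerveTop A k))
      (arc : Finset (Fin n) → Sym2 (NerveTop A k) → Set (EuclideanSpace ℝ (Fin 2))),
      -- only `k`-element sets `τ` carry a graph
      (∀ τ : Finset (Fin n), τ.card ≠ k → T τ = ⊥) ∧
      -- the edges of `T τ` join only vertices of `V_τ`
      (∀ (τ : Finset (Fin n)) (p q : NerveTop A k), (T τ).Adj p q → τ ⊆ p.1 ∧ τ ⊆ q.1) ∧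
      -- `T τ` restricted to `V_τ` is a tree (whenever `V_τ ≠ ∅`)
      (∀ τ : Finset (Fin n), τ.card = k → (∃ p : NerveTop A k, τ ⊆ p.1) →
        ((T τ).induce {p : NerveTop A k | τ ⊆ p.1}).IsTree) ∧
      -- each edge of the union graph `G` lies in exactly one of the trees,
      -- i.e. `G` is a simple graph
      (∀ (τ τ' : Finset (Fin n)) (p q : NerveTop A k),
        (T τ).Adj p q → (T τ').Adj p q → τ = τ') ∧
      -- every edge of `T τ` is drawn as an arc (image of an injective path) that lies
      -- inside `A_τ` (hence inside `⋃ 𝒜`)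
      (∀ (τ : Finset (Fin n)) (p q : NerveTop A k), (T τ).Adj p q →
        (∃ γ : Path (a p) (a q), Function.Injective ⇑γ ∧ Set.range ⇑γ = arc τ s(p, q)) ∧
          arc τ s(p, q) ⊆ ⋂ i ∈ τ, A i) ∧
      -- arcs meet the vertex points of `G` only at their own endpoints
      (∀ (τ : Finset (Fin n)), ∀ e ∈ (T τ).edgeSet, ∀ w : NerveTop A k,
        a w ∈ arc τ e → w ∈ e) ∧
      -- interiors of the arcs of distinct edges are pairwise disjoint, so the drawing
      -- of `G` is crossing-free
      (∀ (τ τ' : Finset (Fin n)), ∀ e ∈ (T τ).edgeSet, ∀ e' ∈ (T τ').edgeSet, e ≠ e' →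
        (arc τ e \ a '' {x | x ∈ e}) ∩ (arc τ' e' \ a '' {x | x ∈ e'}) = ∅) := by
  classical
  have hmem : ∀ (σ : Finset (Fin n)) x, x ∈ (⋂ i ∈ σ, A i) ↔ ∀ i ∈ σ, x ∈ A i := by
    intro σ x
    simp
  have hcard : ∀ (σ : Finset (Fin n)) x, (∀ i ∈ σ, x ∈ A i) → σ.card ≤ k + 1 := by
    intro σ x hx
    by_contra hlt
    obtain ⟨ρ, hρσ, hρ⟩ := Finset.exists_subset_card_eq (s := σ) (n := k + 1 + 1) (by omega)
    have hne : Nonempty (NerveTop A (k + 1)) :=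
      ⟨⟨ρ, hρ, x, (hmem _ _).2 fun i hi => hx i (hρσ hi)⟩⟩
    have hpos : 0 < Nat.card (NerveTop A (k + 1)) := Nat.card_pos
    exact absurd h1 hpos.ne'
  have hsub : ∀ (σ τ : Finset (Fin n)) x, (∀ i ∈ σ, x ∈ A i) → (∀ i ∈ τ, x ∈ A i) →
      σ.card = k + 1 → τ ⊆ σ := by
    intro σ τ x hσ hτ hc
    have h3 : (σ ∪ τ).card ≤ k + 1 := hcard _ x (by
      intro i hi
      rcases Finset.mem_union.1 hi with h | h
      · exact hσ i h
      · exact hτ i h)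
    have h4 : σ = σ ∪ τ := Finset.eq_of_subset_of_card_le Finset.subset_union_left (by omega)
    rw [h4]
    exact Finset.subset_union_right
  let O : {τ : Finset (Fin n) // τ.card = k ∧ IsOpen (⋂ i ∈ τ, A i) ∧
    IsPathConnected (⋂ i ∈ τ, A i)} → Set (EuclideanSpace ℝ (Fin 2)) := fun τ => ⋂ i ∈ τ.1, A i
  obtain ⟨T, arc, hT1, hT2, hT3, hT4, hT5⟩ := RT.core a (fun p => ⋂ i ∈ p.1, A i) O
    (fun τ => {p | τ.1 ⊆ p.1}) (fun τ => τ.2.2.1) (fun τ => τ.2.2.2) ha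
    (by
      intro p
      rcases h2 p.1 (Or.inr p.2.1) with h | ⟨x, h⟩ | h
      · exact absurd h p.2.2.ne_empty
      · change IsPathConnected (⋂ i ∈ p.1, A i)
        rw [h]
        exact isPathConnected_singleton x
      · exact h.2)
    (by
      intro p q hne
      refine Set.disjoint_left.2 fun x hx hx' => hne ?_
      have h3 := (hmem _ _).1 hx
      have h4 := (hmem _ _).1 hx'
      exact Subtype.ext (Finset.Subset.antisymm (hsub _ _ x h4 h3 q.2.1) (hsub _ _ x h3 h4 p.2.1)))
    (by
      intro τ p hp x hx
      exact (hmem _ _).2 fun i hi => (hmem _ _).1 hx i (hp hi))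
    (by
      intro τ p x hx hx'
      exact hsub _ _ x ((hmem _ _).1 hx) ((hmem _ _).1 hx') p.2.1)
    (by
      intro τ τ' hne x hx hx'
      have h3 := (hmem _ _).1 hx
      have h4 := (hmem _ _).1 hx'
      have h5 : ∀ i ∈ τ.1 ∪ τ'.1, x ∈ A i := by
        intro i hi
        rcases Finset.mem_union.1 hi with h | h
        · exact h3 i h
        · exact h4 i h
      have h6 := hcard _ x h5
      have h7 : (τ.1 ∪ τ'.1).card = k + 1 := by
        by_contra h
        have h8 : τ.1 = τ.1 ∪ τ'.1 := Finset.eq_of_subset_of_card_le Finset.subset_union_left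
          (by have := τ.2.1; omega)
        have h9 : τ'.1 = τ.1 ∪ τ'.1 := Finset.eq_of_subset_of_card_le Finset.subset_union_right
          (by have := τ'.2.1; omega)
        exact hne (Subtype.ext (h8.trans h9.symm))
      have h8 : (⋂ i ∈ τ.1 ∪ τ'.1, A i) = O τ ∩ O τ' := by
        ext y
        rw [Set.mem_inter_iff, hmem, hmem, hmem]
        simp only [Finset.mem_union]
        constructor
        · intro h
          exact ⟨fun i hi => h i (Or.inl hi), fun i hi => h i (Or.inr hi)⟩
        · rintro ⟨h, h'⟩ i (hi | hi)
          · exact h i hi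
          · exact h' i hi
      refine ⟨⟨τ.1 ∪ τ'.1, h7, x, (hmem _ _).2 h5⟩, ?_, ?_⟩
      · change IsOpen (⋂ i ∈ τ.1 ∪ τ'.1, A i)
        rw [h8]
        exact τ.2.2.1.inter τ'.2.2.1
      · exact h8.ge)
  let T' : Finset (Fin n) → SimpleGraph (NerveTop A k) := fun τ =>
    if h : τ.card = k ∧ IsOpen (⋂ i ∈ τ, A i) ∧ IsPathConnected (⋂ i ∈ τ, A i) then T ⟨τ, h⟩ else ⊥
  let arc' : Finset (Fin n) → Sym2 (NerveTop A k) → Set (EuclideanSpace ℝ (Fin 2)) := fun τ =>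
    if h : τ.card = k ∧ IsOpen (⋂ i ∈ τ, A i) ∧ IsPathConnected (⋂ i ∈ τ, A i) then arc ⟨τ, h⟩
    else fun _ => ∅
  have hT' : ∀ τ, T' τ = ⊥ ∨ ∃ i : {τ : Finset (Fin n) // τ.card = k ∧ IsOpen (⋂ i ∈ τ, A i) ∧
      IsPathConnected (⋂ i ∈ τ, A i)}, i.1 = τ ∧ T' τ = T i ∧ arc' τ = arc i := by
    intro τ
    by_cases h : τ.card = k ∧ IsOpen (⋂ i ∈ τ, A i) ∧ IsPathConnected (⋂ i ∈ τ, A i)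
    · exact Or.inr ⟨⟨τ, h⟩, rfl, dif_pos h, dif_pos h⟩
    · exact Or.inl (dif_neg h)
  have hadj : ∀ τ p q, (T' τ).Adj p q → τ.card = k ∧ τ ⊆ p.1 ∧ τ ⊆ q.1 := by
    intro τ p q h
    rcases hT' τ with h3 | ⟨i, rfl, h4, h5⟩
    · rw [h3] at h
      exact h.elim
    · rw [h4] at h
      exact ⟨i.2.1, hT1 i p q h⟩
  refine ⟨T', arc', ?_, ?_, ?_, ?_, ?_, ?_, ?_⟩
  · intro τ hτ
    exact dif_neg fun h => hτ h.1
  · intro τ p q h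
    exact (hadj τ p q h).2
  · rintro τ hτ ⟨p, hp⟩
    by_cases h : IsOpen (⋂ i ∈ τ, A i) ∧ IsPathConnected (⋂ i ∈ τ, A i)
    · have h3 : T' τ = T ⟨τ, hτ, h⟩ := dif_pos ⟨hτ, h⟩
      rw [h3]
      exact hT2 ⟨τ, hτ, h⟩ ⟨p, hp⟩
    · have hin : ∀ q : NerveTop A k, τ ⊆ q.1 → a q ∈ ⋂ i ∈ τ, A i := fun q hq =>
        (hmem _ _).2 fun i hi => (hmem _ _).1 (ha q) i (hq hi)
      have hsing : ∃ x, (⋂ i ∈ τ, A i) = {x} := by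
        rcases h2 τ (Or.inl hτ) with h3 | h3 | h3
        · have h4 := hin p hp
          rw [h3] at h4
          exact h4.elim
        · exact h3
        · exact (h h3).elim
      obtain ⟨x, hx⟩ := hsing
      have hss : Subsingleton {q : NerveTop A k | τ ⊆ q.1} := by
        refine ⟨fun q r => Subtype.ext (hainj ?_)⟩
        have h3 := hin q.1 q.2
        have h4 := hin r.1 r.2
        rw [hx] at h3 h4
        exact h3.trans h4.symm
      have hne : Nonempty {q : NerveTop A k | τ ⊆ q.1} := ⟨⟨p, hp⟩⟩
      exact SimpleGraph.IsTree.of_subsingleton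
  · intro τ τ' p q h h'
    obtain ⟨h3, h4, h5⟩ := hadj _ _ _ h
    obtain ⟨h3', h4', h5'⟩ := hadj _ _ _ h'
    have hne : p.1 ≠ q.1 := fun e => h.ne (Subtype.ext e)
    have hlt : (p.1 ∩ q.1).card < k + 1 := by
      by_contra hge
      have h6 : p.1 ∩ q.1 = p.1 := Finset.eq_of_subset_of_card_le Finset.inter_subset_left
        (by have := p.2.1; omega)
      have h7 : p.1 ∩ q.1 = q.1 := Finset.eq_of_subset_of_card_le Finset.inter_subset_right
        (by have := q.2.1; omega)
      exact hne (h6.symm.trans h7)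
    have h8 : τ = p.1 ∩ q.1 := Finset.eq_of_subset_of_card_le (Finset.subset_inter h4 h5) (by omega)
    have h9 : τ' = p.1 ∩ q.1 :=
      Finset.eq_of_subset_of_card_le (Finset.subset_inter h4' h5') (by omega)
    rw [h8, h9]
  · intro τ p q h
    rcases hT' τ with h3 | ⟨i, rfl, h4, h5⟩
    · rw [h3] at h
      exact h.elim
    · rw [h4] at h
      rw [h5]
      exact hT3 i p q h
  · intro τ e he w hw
    rcases hT' τ with h3 | ⟨i, rfl, h4, h5⟩
    · rw [h3] at he
      simp at he
    · rw [h4] at he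
      rw [h5] at hw
      exact hT4 i e he w hw
  · intro τ τ' e he e' he' hne
    rcases hT' τ with h3 | ⟨i, rfl, h4, h5⟩
    · rw [h3] at he
      simp at he
    rcases hT' τ' with h3 | ⟨j, rfl, h4', h5'⟩
    · rw [h3] at he'
      simp at he'
    rw [h4] at he
    rw [h4'] at he'
    rw [h5, h5']
    refine Set.eq_empty_of_forall_notMem ?_
    rintro z ⟨⟨hz, hz1⟩, hz', hz1'⟩
    obtain ⟨w, hw, hw', rfl⟩ := hT5 i j e he e' he' hne z hz hz'
    exact hz1 ⟨w, hw, rfl⟩
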